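/- arXiv:1506.01512 — 3 statements merged into one kernel-verified Lean document; each statement's English description precedes it below -/
import Mathlib

section
/- Let n ≥ 2 be an integer. There exists a constant C depending only on n with the following property. Let I ⊆ ℝ be a bounded open interval and, for j = 2,…,n, let ã_j ∈ C^{n-1,1}(Ī, ℂ) and let r_j : I → ℂ be absolutely continuous with r_j^j = ã_j on I. Let t₀ ∈ I and k ∈ {2,…,n} satisfy |ã_k(t₀)|^{1/k} = max_{2≤j≤n} |ã_j(t₀)|^{1/j} ≠ 0. Let 0 < B < 1/3 and set M := max_{2≤j≤n} (Lip_I(ã_j^{(n-1)}))^{1/n} · |ã_k(t₀)|^{(n−j)/(kn)}. Assume M|I| + Σ_{j=2}^n ∫_I |r_j'| ≤ B |ã_k(t₀)|^{1/k}. Then for all j = 2,…,n and s = 1,…,n−1: ‖ã_j^{(s)}‖_{L^∞(I)} ≤ C |I|^{-s} |ã_k(t₀)|^{j/k} and Lip_I(ã_j^{(n-1)}) ≤ C |I|^{-n} |ã_k(t₀)|^{j/k}. -/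
open Set MeasureTheory Real

noncomputable section

/-- `f` is absolutely continuous on the set `S` : for every `ε > 0` there is `δ > 0` such
that for any finitely many non-overlapping intervals `[u i, v i] ⊆ S` of total length `< δ`
the sum `∑ ‖f (v i) - f (u i)‖` is `< ε`. -/
def AbsContOn {E : Type*} [NormedAddCommGroup E] (f : ℝ → E) (S : Set ℝ) : Prop :=
  ∀ ε : ℝ, 0 < ε → ∃ δ : ℝ, 0 < δ ∧
    ∀ (N : ℕ) (u v : Fin N → ℝ),
      (∀ i, u i ≤ v i ∧ Set.Icc (u i) (v i) ⊆ S) →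
      (∀ i j, i ≠ j → Disjoint (Set.Ioo (u i) (v i)) (Set.Ioo (u j) (v j))) →
      (∑ i, (v i - u i)) < δ →
      (∑ i, ‖f (v i) - f (u i)‖) < ε

/-- `d (i+1)` is the derivative of `d i` on `S` for all `i < k`; thus `d i` is the `i`-th
derivative of `d 0` on `S` for `i ≤ k`. -/
def DerivChain {E : Type*} [NormedAddCommGroup E] [NormedSpace ℝ E]
    (d : ℕ → ℝ → E) (k : ℕ) (S : Set ℝ) : Prop :=
  ∀ i < k, ∀ x ∈ S, HasDerivWithinAt (d i) (d (i + 1) x) S x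

/-- Hölder constant of exponent `a` of `g` on `S`. -/
def HolderConst {E : Type*} [NormedAddCommGroup E] (a : ℝ) (S : Set ℝ) (g : ℝ → E) : ℝ :=
  sSup {r : ℝ | ∃ x ∈ S, ∃ y ∈ S, x ≠ y ∧ r = ‖g x - g y‖ / |x - y| ^ a}

/-- Membership in `C^{k,1}(S)`, encoded via the chain of derivatives `d`:
`d 0` is `k` times differentiable with `i`-th derivative `d i`, and the top
derivative `d k` is Lipschitz. -/
def MemCk1 {E : Type*} [NormedAddCommGroup E] [NormedSpace ℝ E]
    (d : ℕ → ℝ → E) (k : ℕ) (S : Set ℝ) : Prop :=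
  DerivChain d k S ∧ ∃ L : ℝ, ∀ x ∈ S, ∀ y ∈ S, ‖d k x - d k y‖ ≤ L * |x - y|

/-- The `C^{k,1}`-norm: sup of all derivatives up to order `k` plus the Lipschitz
(Hölder-1) constant of the `k`-th derivative. -/
def CNorm {E : Type*} [NormedAddCommGroup E] (d : ℕ → ℝ → E) (k : ℕ) (S : Set ℝ) : ℝ :=
  sSup {r : ℝ | ∃ i ≤ k, ∃ x ∈ S, r = ‖d i x‖} + HolderConst 1 S (d k)


set_option maxHeartbeats 1000000 in
open Filter Topology in
lemma aux_ext {f : ℝ → ℂ} {a b : ℝ} (hab : a < b) (hf : AbsContOn f (Ioo a b)) :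
    ∃ F : ℝ → ℂ, AbsolutelyContinuousOnInterval F a b ∧ ∀ x ∈ Ioo a b, F x = f x := by
  have huc : ∀ ε : ℝ, 0 < ε → ∃ δ : ℝ, 0 < δ ∧ ∀ x ∈ Ioo a b, ∀ y ∈ Ioo a b, |x - y| < δ →
      dist (f x) (f y) < ε := by
    have key : ∀ ε : ℝ, 0 < ε → ∃ δ : ℝ, 0 < δ ∧ ∀ x ∈ Ioo a b, ∀ y ∈ Ioo a b, x ≤ y →
        y - x < δ → dist (f x) (f y) < ε := by
      intro ε hε
      obtain ⟨δ, hδ, h⟩ := hf ε hε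
      refine ⟨δ, hδ, fun x hx y hy hxy hlt => ?_⟩
      have := h 1 (fun _ => x) (fun _ => y)
        (fun _ => ⟨hxy, fun z hz => ⟨lt_of_lt_of_le hx.1 hz.1, lt_of_le_of_lt hz.2 hy.2⟩⟩)
        (fun i j hij => absurd (Subsingleton.elim i j) hij) (by simpa using hlt)
      rw [dist_comm, dist_eq_norm]
      simpa using this
    intro ε hε
    obtain ⟨δ, hδ, h⟩ := key ε hε
    refine ⟨δ, hδ, fun x hx y hy hlt => ?_⟩
    rcases le_total x y with hxy | hxy
    · exact h x hx y hy hxy (by rw [abs_lt] at hlt; linarith)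
    · rw [dist_comm]
      exact h y hy x hx hxy (by rw [abs_lt] at hlt; linarith)
  have hcont : ContinuousOn f (Ioo a b) := by
    apply UniformContinuousOn.continuousOn
    rw [Metric.uniformContinuousOn_iff]
    intro ε hε
    obtain ⟨δ, hδ, h⟩ := huc ε hε
    exact ⟨δ, hδ, fun x hx y hy hxy => h x hx y hy (by rwa [Real.dist_eq] at hxy)⟩
  have hla : ∃ la, Tendsto f (𝓝[>] a) (𝓝 la) := by
    apply cauchy_map_iff_exists_tendsto.mp
    rw [Metric.cauchy_iff]
    refine ⟨inferInstance, fun ε hε => ?_⟩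
    obtain ⟨δ, hδ, h⟩ := huc ε hε
    refine ⟨f '' (Ioo a (min (a + δ) b)), image_mem_map
      (Ioo_mem_nhdsGT (lt_min (by linarith) hab)), ?_⟩
    rintro _ ⟨x, hx, rfl⟩ _ ⟨y, hy, rfl⟩
    have hx2 := lt_min_iff.mp hx.2
    have hy2 := lt_min_iff.mp hy.2
    exact h x ⟨hx.1, hx2.2⟩ y ⟨hy.1, hy2.2⟩ (by
      rw [abs_lt]; constructor <;> linarith [hx.1, hy.1])
  have hlb : ∃ lb, Tendsto f (𝓝[<] b) (𝓝 lb) := by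
    apply cauchy_map_iff_exists_tendsto.mp
    rw [Metric.cauchy_iff]
    refine ⟨inferInstance, fun ε hε => ?_⟩
    obtain ⟨δ, hδ, h⟩ := huc ε hε
    refine ⟨f '' (Ioo (max (b - δ) a) b), image_mem_map
      (Ioo_mem_nhdsLT (max_lt (by linarith) hab)), ?_⟩
    rintro _ ⟨x, hx, rfl⟩ _ ⟨y, hy, rfl⟩
    have hx2 := max_lt_iff.mp hx.1
    have hy2 := max_lt_iff.mp hy.1
    exact h x ⟨hx2.2, hx.2⟩ y ⟨hy2.2, hy.2⟩ (by
      rw [abs_lt]; constructor <;> linarith [hx.2, hy.2])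
  obtain ⟨la, hla⟩ := hla
  obtain ⟨lb, hlb⟩ := hlb
  have hFc := continuousOn_Icc_extendFrom_Ioo hcont hla hlb
  have hFeq : ∀ x ∈ Ioo a b, extendFrom (Ioo a b) f x = f x := by
    intro x hx
    exact extendFrom_eq (subset_closure hx) (hcont x hx)
  refine ⟨extendFrom (Ioo a b) f, ?_, hFeq⟩
  set F := extendFrom (Ioo a b) f with hF
  rw [absolutelyContinuousOnInterval_iff]
  intro ε hε
  obtain ⟨δ, hδ, h⟩ := hf (ε / 2) (by positivity)
  refine ⟨δ, hδ, ?_⟩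
  rintro ⟨N, E⟩ ⟨hE1, hE2⟩ hlen
  simp only [Finset.mem_range, uIcc_of_le hab.le] at hE1 hE2 hlen ⊢
  let m : ℝ := (a + b) / 2
  let φ : ℝ → ℝ → ℝ := fun τ x => m + (1 - τ) * (x - m)
  have hφ : ∀ τ ∈ Ioo (0:ℝ) 1, ∀ x ∈ Icc a b, φ τ x ∈ Ioo a b := by
    intro τ hτ x hx
    obtain ⟨h0, h1⟩ := hτ
    obtain ⟨hx1, hx2⟩ := hx
    simp only [φ, m]
    constructor <;> nlinarith
  have hφm : ∀ τ ∈ Ioo (0:ℝ) 1, StrictMono (φ τ) := by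
    intro τ hτ x y hxy
    obtain ⟨h0, h1⟩ := hτ
    simp only [φ]
    nlinarith
  have hbd : ∀ τ ∈ Ioo (0:ℝ) 1,
      ∑ i ∈ Finset.range N, dist (F (φ τ (E i).1)) (F (φ τ (E i).2)) ≤ ε / 2 := by
    intro τ hτ
    have hmono := hφm τ hτ
    have := h N (fun i => φ τ (min (E i).1 (E i).2)) (fun i => φ τ (max (E i).1 (E i).2)) ?_ ?_ ?_
    · refine le_of_eq_of_le ?_ this.le
      rw [Finset.sum_range]
      refine Finset.sum_congr rfl fun i _ => ?_
      have e1 := hE1 i i.2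
      rw [hFeq _ (hφ τ hτ _ e1.1), hFeq _ (hφ τ hτ _ e1.2)]
      rcases le_total (E i).1 (E i).2 with hle | hle
      · rw [min_eq_left hle, max_eq_right hle, dist_comm, dist_eq_norm]
      · rw [min_eq_right hle, max_eq_left hle, dist_eq_norm]
    · intro i
      have e1 := hE1 i i.2
      refine ⟨hmono.monotone min_le_max, fun z hz => ?_⟩
      have h1 := hφ τ hτ (min (E i).1 (E i).2) ⟨le_min e1.1.1 e1.2.1, (min_le_left _ _).trans e1.1.2⟩
      have h2 := hφ τ hτ (max (E i).1 (E i).2) ⟨e1.1.1.trans (le_max_left _ _), max_le e1.1.2 e1.2.2⟩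
      exact ⟨lt_of_lt_of_le h1.1 hz.1, lt_of_le_of_lt hz.2 h2.2⟩
    · intro i j hij
      have hd := hE2 (by simp) (by simp) (fun h => hij (Fin.ext h) : (i:ℕ) ≠ j)
      simp only [Function.onFun] at hd
      rw [Set.disjoint_left] at hd ⊢
      intro z hz1 hz2
      have hτ1 : 1 - τ ≠ 0 := by linarith [hτ.2]
      obtain ⟨w, rfl⟩ : ∃ w, φ τ w = z := ⟨m + (z - m) / (1 - τ), by
        simp only [φ]; field_simp; ring⟩
      refine hd (a := w) ?_ ?_
      · exact ⟨hmono.lt_iff_lt.mp hz1.1, (hmono.lt_iff_lt.mp hz1.2).le⟩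
      · exact ⟨hmono.lt_iff_lt.mp hz2.1, (hmono.lt_iff_lt.mp hz2.2).le⟩
    · refine lt_of_le_of_lt ?_ hlen
      rw [Finset.sum_range]
      refine Finset.sum_le_sum fun i _ => ?_
      have h1 : dist (E i).1 (E i).2 = max (E i).1 (E i).2 - min (E i).1 (E i).2 := by
        rw [Real.dist_eq, max_sub_min_eq_abs']
      rw [h1]
      have : min (E i).1 (E i).2 ≤ max (E i).1 (E i).2 := min_le_max
      simp only [φ]
      nlinarith [hτ.1, hτ.2]
  have hlim : ∀ x ∈ Icc a b, Tendsto (fun τ => F (φ τ x)) (𝓝[>] 0) (𝓝 (F x)) := by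
    intro x hx
    have h1 : Tendsto (fun τ => φ τ x) (𝓝[>] 0) (𝓝[Icc a b] x) := by
      apply tendsto_nhdsWithin_of_tendsto_nhds_of_eventually_within
      · have : Continuous fun τ => φ τ x := by simp only [φ]; fun_prop
        have h2 := this.tendsto 0
        simp only [φ] at h2
        refine (h2.mono_left nhdsWithin_le_nhds).trans ?_
        simp
      · filter_upwards [Ioo_mem_nhdsGT (zero_lt_one' ℝ)] with τ hτ
        exact Ioo_subset_Icc_self (hφ τ hτ x hx)
    exact (hFc x hx).tendsto.comp h1
  have hsum : Tendsto (fun τ => ∑ i ∈ Finset.range N, dist (F (φ τ (E i).1)) (F (φ τ (E i).2)))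
      (𝓝[>] 0) (𝓝 (∑ i ∈ Finset.range N, dist (F (E i).1) (F (E i).2))) := by
    apply tendsto_finset_sum
    intro i hi
    have e1 := hE1 i (Finset.mem_range.mp hi)
    exact (hlim _ e1.1).dist (hlim _ e1.2)
  have := le_of_tendsto hsum (by
    filter_upwards [Ioo_mem_nhdsGT (zero_lt_one' ℝ)] with τ hτ using hbd τ hτ)
  linarith

lemma aux_comp {F : ℝ → ℂ} {a b : ℝ} (hF : AbsolutelyContinuousOnInterval F a b)
    (l : StrongDual ℝ ℂ) : AbsolutelyContinuousOnInterval (fun x => l (F x)) a b := by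
  apply squeeze_zero (fun t ↦ ?_) (fun t ↦ ?_) (by simpa using Filter.Tendsto.const_mul ‖l‖ hF)
  · exact Finset.sum_nonneg (fun i hi ↦ by positivity)
  · rw [Finset.mul_sum]
    refine Finset.sum_le_sum fun i _ => ?_
    rw [dist_eq_norm, dist_eq_norm, ← map_sub]
    exact l.le_opNorm _

lemma aux_ftc {F : ℝ → ℂ} {a b : ℝ} (hab : a < b) (hF : AbsolutelyContinuousOnInterval F a b)
    {x y : ℝ} (hx : x ∈ Ioo a b) (hy : y ∈ Ioo a b) (hxy : x ≤ y) :
    ‖F y - F x‖ ≤ ∫ t in Ioo a b, ‖deriv F t‖ := by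
  have hre := aux_comp hF Complex.reCLM
  have him := aux_comp hF Complex.imCLM
  have hdiff : ∀ᵐ t : ℝ, t ∈ uIcc a b → DifferentiableAt ℝ F t := by
    filter_upwards [hre.ae_differentiableAt, him.ae_differentiableAt] with t h1 h2 ht
    have h3 := ((Complex.ofRealCLM.differentiableAt.comp t (h1 ht)).add
      ((Complex.ofRealCLM.differentiableAt.comp t (h2 ht)).mul_const Complex.I))
    refine h3.congr_of_eventuallyEq (Filter.Eventually.of_forall fun u => ?_)
    simp
  have hcomp : ∀ (l : StrongDual ℝ ℂ) (t : ℝ), DifferentiableAt ℝ F t →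
      deriv (fun x => l (F x)) t = l (deriv F t) := by
    intro l t ht
    exact (l.hasFDerivAt.comp_hasDerivAt t ht.hasDerivAt).deriv
  have hint : IntervalIntegrable (fun t => ‖deriv F t‖) volume a b := by
    refine (hre.intervalIntegrable_deriv.norm.add him.intervalIntegrable_deriv.norm).mono_fun
      (measurable_deriv F).norm.aestronglyMeasurable ?_
    rw [Filter.EventuallyLE, ae_restrict_iff' measurableSet_uIoc]
    filter_upwards [hdiff] with t ht htm
    have hd := ht (uIoc_subset_uIcc htm)
    rw [hcomp _ _ hd, hcomp _ _ hd, norm_norm]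
    refine (Complex.norm_le_abs_re_add_abs_im _).trans ?_
    exact le_abs_self _
  obtain ⟨l, hl1, hl2⟩ := exists_dual_vector'' ℝ (F y - F x)
  have hsub : uIcc x y ⊆ uIcc a b := by
    rw [uIcc_of_le hxy, uIcc_of_le hab.le]
    exact Icc_subset_Icc hx.1.le hy.2.le
  have hlac := (aux_comp hF l).mono hsub
  have e := hlac.integral_deriv_eq_sub
  rw [map_sub] at hl2
  have hl2' : l (F y) - l (F x) = ‖F y - F x‖ := by simpa using hl2
  rw [← hl2', ← e]
  have hint2 : IntervalIntegrable (fun t => ‖deriv F t‖) volume x y := hint.mono_set hsub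
  calc ∫ t in x..y, deriv (fun x => l (F x)) t ≤ ∫ t in x..y, ‖deriv F t‖ := by
        apply intervalIntegral.integral_mono_ae_restrict hxy hlac.intervalIntegrable_deriv hint2
        rw [Filter.EventuallyLE, ae_restrict_iff' measurableSet_Icc]
        filter_upwards [hdiff] with t ht htm
        rw [hcomp _ _ (ht (hsub (by rwa [uIcc_of_le hxy])))]
        refine (le_abs_self _).trans ?_
        refine (l.le_opNorm _).trans ?_
        exact mul_le_of_le_one_left (norm_nonneg _) hl1
    _ ≤ ∫ t in Ioo a b, ‖deriv F t‖ := by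
        rw [intervalIntegral.integral_of_le hxy]
        apply setIntegral_mono_set
        · exact ((intervalIntegrable_iff_integrableOn_Ioo_of_le hab.le).mp hint)
        · exact Filter.Eventually.of_forall fun _ => norm_nonneg _
        · exact (show Ioc x y ⊆ Ioo a b from fun t ht =>
            ⟨hx.1.trans ht.1, lt_of_le_of_lt ht.2 hy.2⟩).eventuallyLE

lemma aux_ac {f : ℝ → ℂ} {a b : ℝ} (hab : a < b) (hf : AbsContOn f (Ioo a b))
    {x y : ℝ} (hx : x ∈ Ioo a b) (hy : y ∈ Ioo a b) :
    ‖f y - f x‖ ≤ ∫ t in Ioo a b, ‖deriv f t‖ := by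
  obtain ⟨F, hF, hFe⟩ := aux_ext hab hf
  have e : ∫ t in Ioo a b, ‖deriv f t‖ = ∫ t in Ioo a b, ‖deriv F t‖ := by
    apply setIntegral_congr_fun measurableSet_Ioo
    intro t ht
    have : f =ᶠ[nhds t] F := by
      filter_upwards [isOpen_Ioo.mem_nhds ht] with u hu using (hFe u hu).symm
    simp only [this.deriv_eq]
  rw [e, ← hFe x hx, ← hFe y hy]
  rcases le_total x y with h | h
  · exact aux_ftc hab hF hx hy h
  · rw [norm_sub_rev]
    exact aux_ftc hab hF hy hx h

lemma aux_taylor {a b : ℝ} {K : ℝ} (hK : 0 ≤ K) (m : ℕ) : ∀ (g : ℕ → ℝ → ℂ),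
    DerivChain g m (Ioo a b) →
    (∀ x ∈ Ioo a b, ∀ y ∈ Ioo a b, ‖g m x - g m y‖ ≤ K * |x - y|) →
    ∀ x ∈ Ioo a b, ∀ t ∈ Ioo a b,
      ‖g 0 x - ∑ i ∈ Finset.range (m + 1), (((x - t) ^ i / (i.factorial : ℝ) : ℝ) : ℂ) * g i t‖
        ≤ K * (b - a) ^ (m + 1) := by
  induction m with
  | zero =>
    intro g _ hL x hx t ht
    have h1 := hL x hx t ht
    simp only [zero_add, Finset.range_one, Finset.sum_singleton, pow_zero, Nat.factorial_zero,
      Nat.cast_one, div_one, Complex.ofReal_one, one_mul, pow_one]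
    refine h1.trans (mul_le_mul_of_nonneg_left ?_ hK)
    rw [abs_le]
    constructor <;> linarith [hx.1, hx.2, ht.1, ht.2]
  | succ m ih =>
    intro g hg hL x hx t ht
    have ih' := ih (fun i => g (i + 1)) (fun i hi x hx => hg (i + 1) (by omega) x hx) hL
    have hba : 0 ≤ b - a := by linarith [hx.1, hx.2]
    have hder : ∀ z ∈ Ioo a b, HasDerivWithinAt
        (fun z => g 0 z - ∑ i ∈ Finset.range (m + 1 + 1),
          (((z - t) ^ i / (i.factorial : ℝ) : ℝ) : ℂ) * g i t)
        (g 1 z - ∑ i ∈ Finset.range (m + 1),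
          (((z - t) ^ i / (i.factorial : ℝ) : ℝ) : ℂ) * g (i + 1) t) (Ioo a b) z := by
      intro z hz
      refine (hg 0 (by omega) z hz).sub ?_
      simp_rw [Finset.sum_range_succ' _ (m + 1)]
      have h0 : HasDerivWithinAt (fun z : ℝ => ∑ i ∈ Finset.range (m + 1),
          (((z - t) ^ (i + 1) / ((i + 1).factorial : ℝ) : ℝ) : ℂ) * g (i + 1) t)
          (∑ i ∈ Finset.range (m + 1),
          (((z - t) ^ i / (i.factorial : ℝ) : ℝ) : ℂ) * g (i + 1) t) (Ioo a b) z := by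
        apply HasDerivWithinAt.fun_sum
        intro i _
        apply HasDerivWithinAt.mul_const
        apply HasDerivWithinAt.ofReal_comp
        have h1 := (((hasDerivAt_id z).sub_const t).pow (i + 1)).div_const ((i + 1).factorial : ℝ)
        refine (h1.congr_deriv ?_).hasDerivWithinAt
        rw [Nat.factorial_succ]
        push_cast
        have : (i.factorial : ℝ) ≠ 0 := by positivity
        have : (i : ℝ) + 1 ≠ 0 := by positivity
        simp
        field_simp
      have := h0.add_const ((((0:ℝ) : ℂ) + 1) * g 0 t)
      simpa using this
    have := Convex.norm_image_sub_le_of_norm_hasDerivWithin_le hder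
      (fun z hz => ih' z hz t ht) (convex_Ioo a b) ht hx
    have e0 : g 0 t - ∑ i ∈ Finset.range (m + 1 + 1),
          (((t - t) ^ i / (i.factorial : ℝ) : ℝ) : ℂ) * g i t = 0 := by
      rw [Finset.sum_range_succ']
      simp
    rw [e0, sub_zero] at this
    refine this.trans ?_
    rw [pow_succ (b - a) (m + 1), ← mul_assoc]
    refine mul_le_mul_of_nonneg_left ?_ (by positivity)
    rw [Real.norm_eq_abs, abs_le]
    constructor <;> linarith [hx.1, hx.2, ht.1, ht.2]

lemma aux_interp (n : ℕ) (hn : 2 ≤ n) : ∃ C : ℝ, 0 < C ∧ ∀ (a b : ℝ), a < b →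
    ∀ g : ℕ → ℝ → ℂ, DerivChain g (n - 1) (Ioo a b) → ∀ K P : ℝ, 0 ≤ K →
    (∀ x ∈ Ioo a b, ∀ y ∈ Ioo a b, ‖g (n - 1) x - g (n - 1) y‖ ≤ K * |x - y|) →
    (∀ x ∈ Ioo a b, ‖g 0 x‖ ≤ P) →
    ∀ s < n, ∀ t ∈ Ioo a b, ‖g s t‖ ≤ C * ((b - a) ^ s)⁻¹ * (P + K * (b - a) ^ n) := by
  have hn0 : (n : ℝ) ≠ 0 := by positivity
  let v : Fin n → ℂ := fun m => (((m : ℕ) / (n : ℝ) : ℝ) : ℂ)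
  have hv : Function.Injective v := by
    intro i j hij
    have h1 := Complex.ofReal_injective hij
    rw [div_left_inj' hn0] at h1
    exact Fin.ext (Nat.cast_injective h1)
  let V := Matrix.vandermonde v
  have hV : IsUnit V.det := (Matrix.det_vandermonde_ne_zero_iff.mpr hv).isUnit
  let D : ℝ := ∑ i, ∑ m, ‖V⁻¹ i m‖
  have hD : 0 ≤ D := by positivity
  refine ⟨n.factorial * 2 ^ n * (D + 1), by positivity, ?_⟩
  intro a b hab g hg K P hK hL hP s hs t ht
  have hh : 0 < b - a := by linarith
  obtain ⟨y, hy, hym⟩ : ∃ y : ℝ, |y| = (b - a) / 2 ∧ ∀ u : ℝ, 0 ≤ u → u < 1 →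
      t + y * u ∈ Ioo a b := by
    obtain ⟨h1, h2⟩ := ht
    rcases le_total t ((a + b) / 2) with h | h
    · refine ⟨(b - a) / 2, abs_of_pos (by positivity), fun u hu hu1 => ?_⟩
      constructor <;> nlinarith
    · refine ⟨-((b - a) / 2), by rw [abs_neg, abs_of_pos (by positivity)], fun u hu hu1 => ?_⟩
      constructor <;> nlinarith
  let c : Fin n → ℂ := fun i => ((y ^ (i : ℕ) / ((i : ℕ).factorial : ℝ) : ℝ) : ℂ) * g i t
  set Q := P + K * (b - a) ^ n with hQ
  have hVc : ∀ m, ‖(V.mulVec c) m‖ ≤ Q := by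
    intro m
    have hu1 : ((m : ℕ) : ℝ) / n < 1 := by
      rw [div_lt_one (by positivity)]; exact_mod_cast m.2
    have hx := hym ((m : ℕ) / (n : ℝ)) (by positivity) hu1
    have hT := aux_taylor hK (n - 1) g hg hL _ hx t ht
    rw [Nat.sub_add_cancel (by omega : 1 ≤ n), Finset.sum_range] at hT
    have e : (V.mulVec c) m = ∑ i : Fin n, (((t + y * ((m : ℕ) / (n : ℝ)) - t) ^ (i : ℕ) /
        ((i : ℕ).factorial : ℝ) : ℝ) : ℂ) * g i t := by
      simp only [Matrix.mulVec, dotProduct, V, Matrix.vandermonde_apply, v, c]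
      refine Finset.sum_congr rfl fun i _ => ?_
      rw [add_sub_cancel_left, mul_pow]
      push_cast
      ring
    rw [← e] at hT
    have h3 := hP _ hx
    have h4 := norm_sub_norm_le ((V.mulVec c) m) (g 0 (t + y * ((m : ℕ) / (n : ℝ))))
    rw [norm_sub_rev] at h4
    linarith
  have hQ0 : 0 ≤ Q := (norm_nonneg _).trans (hVc ⟨0, by omega⟩)
  have hc : c = V⁻¹.mulVec (V.mulVec c) := by
    rw [Matrix.mulVec_mulVec, Matrix.nonsing_inv_mul _ hV, Matrix.one_mulVec]
  have hcs : ‖c ⟨s, hs⟩‖ ≤ D * Q := by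
    rw [hc]
    simp only [Matrix.mulVec, dotProduct]
    refine (norm_sum_le _ _).trans ?_
    calc _ ≤ ∑ m, ‖V⁻¹ ⟨s, hs⟩ m‖ * Q := by
          refine Finset.sum_le_sum fun m _ => ?_
          rw [norm_mul]
          exact mul_le_mul_of_nonneg_left (hVc m) (norm_nonneg _)
      _ = (∑ m, ‖V⁻¹ ⟨s, hs⟩ m‖) * Q := by rw [Finset.sum_mul]
      _ ≤ D * Q := by
          refine mul_le_mul_of_nonneg_right ?_ hQ0
          exact Finset.single_le_sum (f := fun i => ∑ m, ‖V⁻¹ i m‖)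
            (fun i _ => by positivity) (Finset.mem_univ _)
  simp only [c] at hcs
  rw [norm_mul, Complex.norm_real, norm_div, norm_pow, Real.norm_eq_abs, hy,
    Real.norm_of_nonneg (by positivity), div_pow] at hcs
  have hfac : (s.factorial : ℝ) ≤ n.factorial := by exact_mod_cast Nat.factorial_le hs.le
  have h2p : (2 : ℝ) ^ s ≤ 2 ^ n := pow_le_pow_right₀ (by norm_num) hs.le
  have hs0 : (0:ℝ) < s.factorial := by positivity
  have hhs : 0 < (b - a) ^ s := by positivity
  have h5 : ‖g s t‖ ≤ s.factorial * 2 ^ s * D * Q * ((b - a) ^ s)⁻¹ := by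
    rw [← div_eq_mul_inv, le_div_iff₀ hhs]
    have : ((b - a) ^ s / 2 ^ s / (s.factorial : ℝ) * ‖g s t‖) * (s.factorial * 2 ^ s)
        = ‖g s t‖ * (b - a) ^ s := by field_simp
    rw [← this]
    calc _ ≤ D * Q * (s.factorial * 2 ^ s) := by gcongr
      _ = _ := by ring
  refine h5.trans ?_
  calc _ ≤ n.factorial * 2 ^ n * (D + 1) * Q * ((b - a) ^ s)⁻¹ := by gcongr; linarith
    _ = _ := by ring

/-- **Lemma bounds2.** Under the dominance assumption and the smallness
assumption `M|I| + ∑_j ‖(ã_j^{1/j})'‖_{L¹(I)} ≤ B |ã_k(t₀)|^{1/k}`, the derivatives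
satisfy `‖ã_j^{(s)}‖_∞ ≤ C(n) |I|^{-s} |ã_k(t₀)|^{j/k}` and
`Lip_I(ã_j^{(n-1)}) ≤ C(n) |I|^{-n} |ã_k(t₀)|^{j/k}`. -/
theorem derivative_bounds_after_smallness (n : ℕ) (hn : 2 ≤ n) :
    ∃ C : ℝ, 0 < C ∧
      ∀ (a b : ℝ), a < b →
      ∀ d : ℕ → ℕ → ℝ → ℂ,
      (∀ j ∈ Finset.Icc 2 n, MemCk1 (d j) (n - 1) (Icc a b)) →
      ∀ r : ℕ → ℝ → ℂ,
      (∀ j ∈ Finset.Icc 2 n, AbsContOn (r j) (Ioo a b)) →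
      (∀ j ∈ Finset.Icc 2 n, ∀ t ∈ Ioo a b, r j t ^ j = d j 0 t) →
      ∀ t₀ ∈ Ioo a b, ∀ k ∈ Finset.Icc 2 n,
      (∀ j ∈ Finset.Icc 2 n, ‖d j 0 t₀‖ ^ ((j : ℝ)⁻¹) ≤ ‖d k 0 t₀‖ ^ ((k : ℝ)⁻¹)) →
      d k 0 t₀ ≠ 0 →
      ∀ B : ℝ, 0 < B → B < 1 / 3 →
      ((Finset.Icc 2 n).sup' (Finset.nonempty_Icc.mpr hn)
          (fun j => (HolderConst 1 (Ioo a b) (d j (n - 1))) ^ ((n : ℝ)⁻¹) *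
            ‖d k 0 t₀‖ ^ (((n : ℝ) - (j : ℝ)) / ((k : ℝ) * (n : ℝ))))) * (b - a) +
        (∑ j ∈ Finset.Icc 2 n, ∫ t in Ioo a b, ‖deriv (r j) t‖) ≤
        B * ‖d k 0 t₀‖ ^ ((k : ℝ)⁻¹) →
      ∀ j ∈ Finset.Icc 2 n, ∀ s : ℕ, 1 ≤ s → s ≤ n - 1 →
        (∀ t ∈ Ioo a b, ‖d j s t‖ ≤ C * ((b - a) ^ s)⁻¹ * ‖d k 0 t₀‖ ^ ((j : ℝ) / (k : ℝ))) ∧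
        HolderConst 1 (Ioo a b) (d j (n - 1)) ≤
          C * ((b - a) ^ n)⁻¹ * ‖d k 0 t₀‖ ^ ((j : ℝ) / (k : ℝ)) := by
  obtain ⟨C₀, hC₀, hint⟩ := aux_interp n hn
  refine ⟨C₀ * (2 ^ n + 1) + 1, by positivity, ?_⟩
  intro a b hab d hd r hr hrj t₀ ht₀ k hk hdom hne B hB0 hB1 hsm j hj s hs1 hs2
  have hh : 0 < b - a := by linarith
  have hk2 := Finset.mem_Icc.mp hk
  have hj2 := Finset.mem_Icc.mp hj
  have hk0 : (k : ℝ) ≠ 0 := by have : k ≠ 0 := by omega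
                               exact_mod_cast this
  have hj0 : (j : ℝ) ≠ 0 := by have : j ≠ 0 := by omega
                               exact_mod_cast this
  have hn0 : (n : ℝ) ≠ 0 := by have : n ≠ 0 := by omega
                               exact_mod_cast this
  have hx0 : 0 < ‖d k 0 t₀‖ := norm_pos_iff.mpr hne
  set A : ℝ := ‖d k 0 t₀‖ ^ ((k : ℝ)⁻¹) with hA
  have hA0 : 0 < A := Real.rpow_pos_of_pos hx0 _
  have hAj : ‖d k 0 t₀‖ ^ ((j : ℝ) / (k : ℝ)) = A ^ j := by
    rw [hA, ← Real.rpow_natCast, ← Real.rpow_mul hx0.le]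
    congr 1
    field_simp
  rw [hAj]
  have hHnn : ∀ i, 0 ≤ HolderConst 1 (Ioo a b) (d i (n - 1)) := by
    intro i
    apply Real.sSup_nonneg
    rintro _ ⟨x, _, y, _, _, rfl⟩
    positivity
  set H := HolderConst 1 (Ioo a b) (d j (n - 1)) with hH
  have hH0 : 0 ≤ H := hHnn j
  -- the two pieces of the smallness assumption
  have hterm := Finset.le_sup' (fun j => (HolderConst 1 (Ioo a b) (d j (n - 1))) ^ ((n : ℝ)⁻¹) *
            ‖d k 0 t₀‖ ^ (((n : ℝ) - (j : ℝ)) / ((k : ℝ) * (n : ℝ)))) hj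
  simp only [← hH] at hterm
  have hterm0 : 0 ≤ H ^ ((n : ℝ)⁻¹) * ‖d k 0 t₀‖ ^ (((n : ℝ) - (j : ℝ)) / ((k : ℝ) * (n : ℝ))) := by
    positivity
  have hintnn : ∀ i ∈ Finset.Icc 2 n, 0 ≤ ∫ t in Ioo a b, ‖deriv (r i) t‖ :=
    fun i _ => integral_nonneg fun _ => norm_nonneg _
  have hsingle := Finset.single_le_sum hintnn hj
  have hsum0 := Finset.sum_nonneg hintnn
  have hMh := mul_le_mul_of_nonneg_right hterm hh.le
  have hBA : B * A ≤ A := by nlinarith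
  have hI : ∫ t in Ioo a b, ‖deriv (r j) t‖ ≤ A := by
    have : 0 ≤ H ^ ((n : ℝ)⁻¹) * ‖d k 0 t₀‖ ^ (((n : ℝ) - (j : ℝ)) / ((k : ℝ) * (n : ℝ))) * (b - a) :=
      mul_nonneg hterm0 hh.le
    linarith
  have hM : H ^ ((n : ℝ)⁻¹) * ‖d k 0 t₀‖ ^ (((n : ℝ) - (j : ℝ)) / ((k : ℝ) * (n : ℝ))) * (b - a)
      ≤ A := by linarith
  have hHb : H * (b - a) ^ n ≤ A ^ j := by
    have h1 := pow_le_pow_left₀ (mul_nonneg hterm0 hh.le) hM n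
    rw [mul_pow, mul_pow] at h1
    have e1 : (H ^ ((n : ℝ)⁻¹)) ^ n = H := Real.rpow_inv_natCast_pow hH0 (by omega)
    have e2 : (‖d k 0 t₀‖ ^ (((n : ℝ) - (j : ℝ)) / ((k : ℝ) * (n : ℝ)))) ^ n = A ^ (n - j) := by
      rw [hA, ← Real.rpow_natCast, ← Real.rpow_natCast, ← Real.rpow_mul hx0.le,
        ← Real.rpow_mul hx0.le, Nat.cast_sub hj2.2]
      congr 1
      field_simp
    rw [e1, e2] at h1
    have e3 : A ^ n = A ^ j * A ^ (n - j) := by rw [← pow_add]; congr 1; omega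
    rw [e3] at h1
    have hp : 0 < A ^ (n - j) := by positivity
    refine le_of_mul_le_mul_right ?_ hp
    linarith
  -- sup bound
  have hsup : ∀ t ∈ Ioo a b, ‖d j 0 t‖ ≤ 2 ^ n * A ^ j := by
    intro t ht
    have h1 := aux_ac hab (hr j hj) ht₀ ht
    have h2 : ‖r j t₀‖ ≤ A := by
      have := hdom j hj
      rw [← hrj j hj t₀ ht₀, norm_pow, Real.pow_rpow_inv_natCast (norm_nonneg _) (by omega)] at this
      exact this
    have h3 : ‖r j t‖ ≤ 2 * A := by
      have := norm_sub_norm_le (r j t) (r j t₀)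
      linarith
    rw [← hrj j hj t ht, norm_pow]
    calc ‖r j t‖ ^ j ≤ (2 * A) ^ j := pow_le_pow_left₀ (norm_nonneg _) h3 j
      _ = 2 ^ j * A ^ j := mul_pow _ _ _
      _ ≤ 2 ^ n * A ^ j := by
        have : (2:ℝ) ^ j ≤ 2 ^ n := pow_le_pow_right₀ (by norm_num) hj2.2
        gcongr
  obtain ⟨hchain, L, hL⟩ := hd j hj
  have hchain' : DerivChain (d j) (n - 1) (Ioo a b) := fun i hi x hx =>
    (hchain i hi x (Ioo_subset_Icc_self hx)).mono Ioo_subset_Icc_self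
  have hLip : ∀ x ∈ Ioo a b, ∀ y ∈ Ioo a b,
      ‖d j (n - 1) x - d j (n - 1) y‖ ≤ H * |x - y| := by
    intro x hx y hy
    by_cases hxy : x = y
    · simp [hxy]
    have hpos : 0 < |x - y| := abs_pos.mpr (sub_ne_zero.mpr hxy)
    rw [← div_le_iff₀ hpos]
    apply le_csSup
    · refine ⟨L, ?_⟩
      rintro _ ⟨u, hu, w, hw, huw, rfl⟩
      have hp : 0 < |u - w| := abs_pos.mpr (sub_ne_zero.mpr huw)
      rw [Real.rpow_one, div_le_iff₀ hp]
      exact hL u (Ioo_subset_Icc_self hu) w (Ioo_subset_Icc_self hw)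
    · exact ⟨x, hx, y, hy, hxy, by rw [Real.rpow_one]⟩
  have hAp : 0 < A ^ j := by positivity
  constructor
  · intro t ht
    refine (hint a b hab (d j) hchain' H _ hH0 hLip hsup s (by omega) t ht).trans ?_
    have hp : 0 < ((b - a) ^ s)⁻¹ := by positivity
    calc C₀ * ((b - a) ^ s)⁻¹ * (2 ^ n * A ^ j + H * (b - a) ^ n)
        ≤ C₀ * ((b - a) ^ s)⁻¹ * (2 ^ n * A ^ j + A ^ j) := by gcongr
      _ = (C₀ * (2 ^ n + 1)) * ((b - a) ^ s)⁻¹ * A ^ j := by ring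
      _ ≤ _ := by gcongr; linarith
  · have hp : 0 < (b - a) ^ n := by positivity
    calc H ≤ A ^ j / (b - a) ^ n := by rwa [le_div_iff₀ hp]
      _ = 1 * ((b - a) ^ n)⁻¹ * A ^ j := by rw [div_eq_mul_inv]; ring
      _ ≤ _ := by
        gcongr
        have : 0 < C₀ * (2 ^ n + 1) := by positivity
        linarith
end
end

section
/- Let n ≥ 2 and 2 ≤ m ≤ n be integers, let C₀ > 0, and let 1 ≤ p < m/(m−1). There exists a constant C depending only on n, p, and C₀ with the following property. Let I ⊆ ℝ be a bounded open interval, A > 0, and for i = 2,…,m let b_i ∈ C^{n-1,1}(Ī, ℂ) satisfy ‖b_i^{(s)}‖_{L^∞(I)} ≤ C₀ |I|^{-s} A^i for all s = 1,…,n−1 and Lip_I(b_i^{(n-1)}) ≤ C₀ |I|^{-n} A^i. Then for each i and each continuous f_i : I → ℂ with f_i^i = b_i on I, the function f_i is absolutely continuous on I and ‖f_i'‖_{L^p(I)} ≤ C |I|^{-1+1/p} A. -/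
open Set MeasureTheory Real

noncomputable section

section Helpers
open Filter Topology ENNReal


lemma ae_deriv_zero {E : Type*} [NormedAddCommGroup E] [NormedSpace ℝ E] (g : ℝ → E) :
    ∀ᵐ x : ℝ, g x = 0 → ∀ g', HasDerivAt g g' x → g' = 0 := by
  have hc : {x : ℝ | g x = 0 ∧ ∃ g', HasDerivAt g g' x ∧ g' ≠ 0}.Countable := by
    apply (HereditarilyLindelofSpace.isLindelof _).countable_of_isDiscrete
    rw [isDiscrete_iff_nhdsNE]
    rintro x ⟨hx, g', hg, hne⟩
    have h := hg.eventually_ne (c := 0) hne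
    rw [← disjoint_iff, Filter.disjoint_principal_right]
    filter_upwards [h] with z hz hz2
    exact hz hz2.1
  filter_upwards [hc.ae_notMem volume] with x hx h0 g' hg
  by_contra hne
  exact hx ⟨h0, g', hg, hne⟩

lemma lint_rpow (q B : ℝ) (hq1 : q < 1) (hB : 0 ≤ B) :
    ∫⁻ y in Icc (-B) B, ENNReal.ofReal (|y| ^ (-q)) ≤ ENNReal.ofReal (2 * B ^ (1 - q) / (1 - q)) := by
  have hpos : ∫⁻ y in Ioc 0 B, ENNReal.ofReal (|y| ^ (-q)) = ENNReal.ofReal (B ^ (1 - q) / (1 - q)) := by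
    have hi := intervalIntegral.intervalIntegrable_rpow' (a := 0) (b := B) (r := -q) (by linarith)
    rw [intervalIntegrable_iff_integrableOn_Ioc_of_le hB] at hi
    have h2 := integral_rpow (a := 0) (b := B) (r := -q) (Or.inl (by linarith))
    rw [intervalIntegral.integral_of_le hB, ] at h2
    have : B ^ (1 - q) / (1 - q) = ∫ x in Ioc 0 B, x ^ (-q) := by
      rw [h2, show -q + 1 = 1 - q by ring, Real.zero_rpow (by linarith)]; simp
    rw [this, ofReal_integral_eq_lintegral_ofReal hi]
    · refine setLIntegral_congr_fun measurableSet_Ioc (fun x hx => ?_)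
      simp only [abs_of_pos hx.1]
    · refine (ae_restrict_iff' measurableSet_Ioc).2 (Eventually.of_forall fun x hx => ?_)
      exact Real.rpow_nonneg hx.1.le _
  have hneg : ∫⁻ y in Ico (-B) 0, ENNReal.ofReal (|y| ^ (-q)) = ENNReal.ofReal (B ^ (1 - q) / (1 - q)) := by
    rw [← hpos]
    have := (Measure.measurePreserving_neg (volume : Measure ℝ)).setLIntegral_comp_preimage_emb (MeasurableEquiv.neg ℝ).measurableEmbedding (fun y => ENNReal.ofReal (|y| ^ (-q))) (Ioc 0 B)
    simpa using this
  have hsub : Icc (-B) B ⊆ (Ico (-B) 0 ∪ {0}) ∪ Ioc 0 B := by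
    intro y hy
    rcases lt_trichotomy y 0 with h | h | h
    · exact Or.inl (Or.inl ⟨hy.1, h⟩)
    · exact Or.inl (Or.inr h)
    · exact Or.inr ⟨h, hy.2⟩
  have hp : 0 ≤ B ^ (1 - q) / (1 - q) := div_nonneg (Real.rpow_nonneg hB _) (by linarith)
  calc _ ≤ _ := lintegral_mono_set hsub
    _ ≤ _ := lintegral_union_le _ _ _
    _ ≤ _ := add_le_add (lintegral_union_le _ _ _) le_rfl
    _ = _ := by
      rw [hneg, hpos]
      simp only [Measure.restrict_singleton, Real.volume_singleton, zero_smul, lintegral_zero_measure, add_zero]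
      rw [← ENNReal.ofReal_add hp hp]; congr 1; ring

lemma rolle_inj {c d : ℝ} {g g' : ℝ → ℝ} (h : ∀ x ∈ Ioo c d, HasDerivAt g (g' x) x)
    (hne : ∀ x ∈ Ioo c d, g' x ≠ 0) : InjOn g (Ioo c d) := by
  have key : ∀ x ∈ Ioo c d, ∀ y ∈ Ioo c d, x < y → g x ≠ g y := by
    intro x hx y hy hxy he
    obtain ⟨z, hz, h0⟩ := exists_hasDerivAt_eq_zero hxy
      (fun t ht => (h t ⟨hx.1.trans_le ht.1, ht.2.trans_lt hy.2⟩).continuousAt.continuousWithinAt) he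
      (fun t ht => h t ⟨hx.1.trans ht.1, ht.2.trans hy.2⟩)
    exact hne z ⟨hx.1.trans hz.1, hz.2.trans hy.2⟩ h0
  intro x hx y hy he
  rcases lt_trichotomy x y with h1 | h1 | h1
  · exact absurd he (key x hx y hy h1)
  · exact h1
  · exact absurd he.symm (key y hy x hx h1)

lemma lint_piece (q B : ℝ) (hq1 : q < 1) (hB : 0 ≤ B) (v : ℕ → ℝ → ℝ) (s : ℕ) :
    ∀ c d : ℝ, (∀ i ≤ s, ∀ x ∈ Ioo c d, HasDerivAt (v i) (v (i + 1) x) x) →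
      (∀ x ∈ Ioo c d, v (s + 1) x ≠ 0) → (∀ x ∈ Ioo c d, |v 0 x| ≤ B) →
      ∫⁻ x in Ioo c d, ENNReal.ofReal (|v 1 x| * |v 0 x| ^ (-q)) ≤
        2 ^ s * ENNReal.ofReal (2 * B ^ (1 - q) / (1 - q)) := by
  induction s with
  | zero =>
    intro c d hd hne hb
    have hinj := rolle_inj (hd 0 le_rfl) hne
    have := lintegral_image_eq_lintegral_abs_deriv_mul measurableSet_Ioo
      (fun x hx => (hd 0 le_rfl x hx).hasDerivWithinAt) hinj (fun y => ENNReal.ofReal (|y| ^ (-q)))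
    simp only [pow_zero, one_mul]
    calc _ = ∫⁻ x in Ioo c d, ENNReal.ofReal (|v (0 + 1) x|) * ENNReal.ofReal (|v 0 x| ^ (-q)) := by
          refine lintegral_congr fun x => ?_
          rw [ENNReal.ofReal_mul (abs_nonneg _)]
      _ = _ := this.symm
      _ ≤ ∫⁻ y in Icc (-B) B, ENNReal.ofReal (|y| ^ (-q)) := by
          refine lintegral_mono_set ?_
          rintro _ ⟨x, hx, rfl⟩
          exact abs_le.1 (hb x hx)
      _ ≤ _ := lint_rpow q B hq1 hB
  | succ s ih =>
    intro c d hd hne hb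
    have hinj := rolle_inj (hd (s + 1) le_rfl) hne
    by_cases hz : ∃ z ∈ Ioo c d, v (s + 1) z = 0
    · obtain ⟨z, hz, hz0⟩ := hz
      have h1 := ih c z (fun i hi x hx => hd i (by omega) x ⟨hx.1, hx.2.trans hz.2⟩)
        (fun x hx h0 => hx.2.ne (hinj ⟨hx.1, hx.2.trans hz.2⟩ hz (h0.trans hz0.symm)))
        (fun x hx => hb x ⟨hx.1, hx.2.trans hz.2⟩)
      have h2 := ih z d (fun i hi x hx => hd i (by omega) x ⟨hz.1.trans hx.1, hx.2⟩)
        (fun x hx h0 => hx.1.ne' (hinj ⟨hz.1.trans hx.1, hx.2⟩ hz (h0.trans hz0.symm)))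
        (fun x hx => hb x ⟨hz.1.trans hx.1, hx.2⟩)
      have hsub : Ioo c d ⊆ (Ioo c z ∪ {z}) ∪ Ioo z d := by
        intro y hy
        rcases lt_trichotomy y z with h | h | h
        · exact Or.inl (Or.inl ⟨hy.1, h⟩)
        · exact Or.inl (Or.inr h)
        · exact Or.inr ⟨h, hy.2⟩
      calc _ ≤ _ := lintegral_mono_set hsub
        _ ≤ _ := lintegral_union_le _ _ _
        _ ≤ _ := add_le_add (lintegral_union_le _ _ _) le_rfl
        _ ≤ _ := by
          simp only [Measure.restrict_singleton, Real.volume_singleton, zero_smul, lintegral_zero_measure, add_zero]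
          rw [pow_succ, mul_assoc, two_mul, mul_add]
          exact add_le_add h1 h2
    · push Not at hz
      refine (ih c d (fun i hi x hx => hd i (by omega) x hx) hz hb).trans ?_
      gcongr
      · norm_num
      · omega

/-- The natural scale of `v` at `x`. -/
def RR (k : ℕ) (v : ℕ → ℝ → ℝ) (x : ℝ) : ℝ :=
  ∑ s ∈ Finset.range k, |v s x| ^ (((k - s : ℕ) : ℝ)⁻¹)

lemma RR_nonneg (k : ℕ) (v : ℕ → ℝ → ℝ) (x : ℝ) : 0 ≤ RR k v x :=
  Finset.sum_nonneg fun _ _ => Real.rpow_nonneg (abs_nonneg _) _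

lemma RR_ge_term {k : ℕ} (v : ℕ → ℝ → ℝ) (x : ℝ) {s : ℕ} (hs : s < k) :
    |v s x| ^ (((k - s : ℕ) : ℝ)⁻¹) ≤ RR k v x :=
  Finset.single_le_sum (f := fun s => |v s x| ^ (((k - s : ℕ) : ℝ)⁻¹))
    (fun _ _ => Real.rpow_nonneg (abs_nonneg _) _) (Finset.mem_range.2 hs)

lemma le_RR_pow {k : ℕ} (v : ℕ → ℝ → ℝ) (x : ℝ) {s : ℕ} (hs : s < k) :
    |v s x| ≤ RR k v x ^ (k - s) := by
  have h := RR_ge_term v x hs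
  have h2 := Real.rpow_inv_natCast_pow (abs_nonneg (v s x)) (n := k - s) (by omega)
  calc _ = _ := h2.symm
    _ ≤ _ := pow_le_pow_left₀ (Real.rpow_nonneg (abs_nonneg _) _) h _

lemma RR_le_of {k : ℕ} (v : ℕ → ℝ → ℝ) (x : ℝ) {M : ℝ} (hM : 0 ≤ M)
    (h : ∀ s < k, |v s x| ≤ M ^ (k - s)) : RR k v x ≤ k * M := by
  have : ∀ s ∈ Finset.range k, |v s x| ^ (((k - s : ℕ) : ℝ)⁻¹) ≤ M := by
    intro s hs
    have hs := Finset.mem_range.1 hs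
    calc _ ≤ (M ^ (k - s)) ^ (((k - s : ℕ) : ℝ)⁻¹) :=
          Real.rpow_le_rpow (abs_nonneg _) (h s hs) (by positivity)
      _ = M := Real.pow_rpow_inv_natCast hM (by omega)
  simpa [RR] using Finset.sum_le_sum this

lemma RR_exists {k : ℕ} (hk : 1 ≤ k) (v : ℕ → ℝ → ℝ) (x : ℝ) :
    ∃ s < k, (RR k v x / k) ^ (k - s) ≤ |v s x| := by
  have hk0 : (0:ℝ) < k := by exact_mod_cast hk
  obtain ⟨s, hs, h⟩ := Finset.exists_le_of_sum_le (s := Finset.range k)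
    (f := fun _ => RR k v x / k) (g := fun s => |v s x| ^ (((k - s : ℕ) : ℝ)⁻¹))
    ⟨0, Finset.mem_range.2 hk⟩ (by
      simp only [Finset.sum_const, Finset.card_range, nsmul_eq_mul]
      rw [mul_div_cancel₀ _ hk0.ne']
      exact le_rfl)
  have hs := Finset.mem_range.1 hs
  refine ⟨s, hs, ?_⟩
  have h2 := Real.rpow_inv_natCast_pow (abs_nonneg (v s x)) (n := k - s) (by omega)
  rw [← h2]
  exact pow_le_pow_left₀ (div_nonneg (RR_nonneg _ _ _) hk0.le) h _

section scale
variable {k : ℕ} {a b : ℝ} {v : ℕ → ℝ → ℝ}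

lemma mvt_aux {g g' : ℝ → ℝ} {x r M : ℝ} 
    (hd : ∀ x ∈ Ioo a b, HasDerivAt g (g' x) x) (hx : x ∈ Ioo a b) (hr : 0 ≤ r)
    (hM : ∀ y ∈ Ioo a b, |y - x| ≤ r → |g' y| ≤ M) :
    ∀ y ∈ Ioo a b, |y - x| ≤ r → |g y - g x| ≤ M * |y - x| := by
  intro y hy hyr
  have hconv : Convex ℝ (Ioo a b ∩ Icc (x - r) (x + r)) := (convex_Ioo a b).inter (convex_Icc _ _)
  have hmem : ∀ z, z ∈ Icc (x - r) (x + r) ↔ |z - x| ≤ r := by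
    intro z; rw [abs_le, mem_Icc]; constructor <;> rintro ⟨h1, h2⟩ <;> constructor <;> linarith
  have := hconv.norm_image_sub_le_of_norm_hasDerivWithin_le (f := g) (f' := g') (C := M)
    (fun z hz => (hd z hz.1).hasDerivWithinAt) (fun z hz => hM z hz.1 ((hmem z).1 hz.2))
    (x := x) (y := y) ⟨hx, (hmem x).2 (by simpa using hr)⟩ ⟨hy, (hmem y).2 hyr⟩
  simpa using this

lemma scale_bound (hk : 1 ≤ k)
    (hd : ∀ i, i + 1 < k → ∀ x ∈ Ioo a b, HasDerivAt (v i) (v (i + 1) x) x)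
    (hL : ∀ x ∈ Ioo a b, ∀ y ∈ Ioo a b, |v (k - 1) x - v (k - 1) y| ≤ |x - y|)
    {x : ℝ} (hx : x ∈ Ioo a b) : ∀ j : ℕ, j < k → ∀ y ∈ Ioo a b, |y - x| ≤ RR k v x →
      |v (k - 1 - j) y| ≤ (j + 2) * RR k v x ^ (j + 1) := by
  intro j
  have h0 := RR_nonneg k v x
  induction j with
  | zero =>
    intro _ y hy hyr
    have h1 := hL y hy x hx
    have h2 := le_RR_pow (k := k) v x (s := k - 1) (by omega)
    rw [show k - (k - 1) = 1 by omega, pow_one] at h2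
    have := abs_sub_abs_le_abs_sub (v (k-1) y) (v (k-1) x)
    simp only [Nat.sub_zero]
    norm_num
    linarith
  | succ j ih =>
    intro hj y hy hyr
    have ih := ih (by omega)
    have h2 := le_RR_pow (k := k) v x (s := k - 1 - (j + 1)) (by omega)
    rw [show k - (k - 1 - (j + 1)) = j + 1 + 1 by omega] at h2
    have hd' := hd (k - 1 - (j + 1)) (by omega)
    rw [show k - 1 - (j + 1) + 1 = k - 1 - j by omega] at hd'
    have h3 := mvt_aux hd' hx h0 ih y hy hyr
    have h4 : (j + 2) * RR k v x ^ (j + 1) * |y - x| ≤ (j + 2) * RR k v x ^ (j + 1) * RR k v x := by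
      gcongr
    have := abs_sub_abs_le_abs_sub (v (k-1-(j+1)) y) (v (k-1-(j+1)) x)
    have h5 : ((j + 1 : ℕ) + 2 : ℝ) * RR k v x ^ (j + 1 + 1) = (j + 2) * RR k v x ^ (j + 1) * RR k v x + RR k v x ^ (j+1+1) := by
      push_cast; ring
    rw [h5]; linarith

lemma scale_bound' (hk : 1 ≤ k)
    (hd : ∀ i, i + 1 < k → ∀ x ∈ Ioo a b, HasDerivAt (v i) (v (i + 1) x) x)
    (hL : ∀ x ∈ Ioo a b, ∀ y ∈ Ioo a b, |v (k - 1) x - v (k - 1) y| ≤ |x - y|)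
    {x : ℝ} (hx : x ∈ Ioo a b) {s : ℕ} (hs : s < k) {y : ℝ} (hy : y ∈ Ioo a b)
    (hyr : |y - x| ≤ RR k v x) : |v s y| ≤ (k + 1) * RR k v x ^ (k - s) := by
  have h := scale_bound hk hd hL hx (k - 1 - s) (by omega) y hy hyr
  rw [show k - 1 - (k - 1 - s) = s by omega, show k - 1 - s + 1 = k - s by omega] at h
  refine h.trans ?_
  have h0 := RR_nonneg k v x
  gcongr ?_ * _
  have : k - 1 - s + 2 ≤ k + 1 := by omega
  exact_mod_cast this

lemma scale_diff (hk : 1 ≤ k)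
    (hd : ∀ i, i + 1 < k → ∀ x ∈ Ioo a b, HasDerivAt (v i) (v (i + 1) x) x)
    (hL : ∀ x ∈ Ioo a b, ∀ y ∈ Ioo a b, |v (k - 1) x - v (k - 1) y| ≤ |x - y|)
    {x : ℝ} (hx : x ∈ Ioo a b) {s : ℕ} (hs : s < k) {y θ : ℝ} (hy : y ∈ Ioo a b)
    (hθ0 : 0 ≤ θ) (hθ : θ ≤ 1)
    (hyr : |y - x| ≤ θ * RR k v x) : |v s y - v s x| ≤ (k + 1) * θ * RR k v x ^ (k - s) := by
  have h0 := RR_nonneg k v x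
  have hk0 : (0:ℝ) ≤ k := by positivity
  rcases Nat.lt_or_ge (s + 1) k with h | h
  · have h3 := mvt_aux (hd s h) hx h0 (fun z hz hzr => scale_bound' hk hd hL hx h hz hzr) y hy
      (hyr.trans (mul_le_of_le_one_left h0 hθ))
    refine h3.trans ?_
    calc _ ≤ (k + 1) * RR k v x ^ (k - (s + 1)) * (θ * RR k v x) := by gcongr
      _ = (k + 1) * θ * RR k v x ^ (k - (s + 1) + 1) := by ring
      _ = _ := by rw [show k - (s + 1) + 1 = k - s by omega]
  · have : s = k - 1 := by omega
    subst this
    rw [show k - (k - 1) = 1 by omega, pow_one]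
    refine (hL y hy x hx).trans (hyr.trans ?_)
    have := mul_nonneg hk0 (mul_nonneg hθ0 h0)
    linarith

/-- the constants -/
def eta (k : ℕ) : ℝ := ((1 : ℝ) / k) ^ k / 2
def tht (k : ℕ) : ℝ := eta k / (k + 1)

lemma eta_pos (hk : 1 ≤ k) : 0 < eta k := by
  have : (0:ℝ) < k := by exact_mod_cast hk
  unfold eta; positivity

lemma eta_le (hk : 1 ≤ k) : eta k ≤ 1 / 2 := by
  have h : (1:ℝ) ≤ k := by exact_mod_cast hk
  have : ((1 : ℝ) / k) ^ k ≤ 1 := pow_le_one₀ (by positivity) (by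
    rw [div_le_one (by linarith)]; exact h)
  unfold eta; linarith

lemma tht_pos (hk : 1 ≤ k) : 0 < tht k := by
  have := eta_pos hk
  unfold tht; positivity

lemma tht_le (hk : 1 ≤ k) : tht k ≤ 1 := by
  have := eta_le hk
  have h : (1:ℝ) ≤ k := by exact_mod_cast hk
  unfold tht
  rw [div_le_one (by linarith)]; linarith

lemma scale_low (hk : 1 ≤ k)
    (hd : ∀ i, i + 1 < k → ∀ x ∈ Ioo a b, HasDerivAt (v i) (v (i + 1) x) x)
    (hL : ∀ x ∈ Ioo a b, ∀ y ∈ Ioo a b, |v (k - 1) x - v (k - 1) y| ≤ |x - y|)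
    {x : ℝ} (hx : x ∈ Ioo a b) : ∃ s < k, ∀ y ∈ Ioo a b, |y - x| ≤ tht k * RR k v x →
      eta k * RR k v x ^ (k - s) ≤ |v s y| := by
  obtain ⟨s, hs, h⟩ := RR_exists hk v x
  have h0 := RR_nonneg k v x
  have h1 : (1:ℝ) ≤ k := by exact_mod_cast hk
  refine ⟨s, hs, fun y hy hyr => ?_⟩
  have h3 := scale_diff hk hd hL hx hs hy (tht_pos hk).le (tht_le hk) hyr
  have h4 : ((k:ℝ) + 1) * tht k = eta k := by unfold tht; field_simp
  rw [h4] at h3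
  have h5 : 2 * eta k * RR k v x ^ (k - s) ≤ (RR k v x / k) ^ (k - s) := by
    have : 2 * eta k ≤ ((1:ℝ)/k) ^ (k - s) := by
      have : 2 * eta k = ((1:ℝ)/k) ^ k := by unfold eta; ring
      rw [this]
      exact pow_le_pow_of_le_one (by positivity) (by rw [div_le_one (by linarith)]; exact h1) (by omega)
    calc _ ≤ ((1:ℝ)/k) ^ (k - s) * RR k v x ^ (k - s) := by gcongr
      _ = _ := by rw [← mul_pow]; ring
  have := abs_sub_abs_le_abs_sub (v s x) (v s y)
  rw [abs_sub_comm] at this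
  linarith

lemma RR_upper (hk : 1 ≤ k)
    (hd : ∀ i, i + 1 < k → ∀ x ∈ Ioo a b, HasDerivAt (v i) (v (i + 1) x) x)
    (hL : ∀ x ∈ Ioo a b, ∀ y ∈ Ioo a b, |v (k - 1) x - v (k - 1) y| ≤ |x - y|)
    {x : ℝ} (hx : x ∈ Ioo a b) {y : ℝ} (hy : y ∈ Ioo a b) (hyr : |y - x| ≤ tht k * RR k v x) :
    RR k v y ≤ k * ((k + 1) * RR k v x) := by
  have h0 := RR_nonneg k v x
  refine RR_le_of v y (by positivity) fun s hs => ?_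
  refine (scale_bound' hk hd hL hx hs hy (hyr.trans (mul_le_of_le_one_left h0 (tht_le hk)))).trans ?_
  rw [mul_pow]
  gcongr
  exact le_self_pow₀ (by linarith [show (0:ℝ) ≤ k by positivity]) (by omega)

lemma RR_lower (hk : 1 ≤ k)
    (hd : ∀ i, i + 1 < k → ∀ x ∈ Ioo a b, HasDerivAt (v i) (v (i + 1) x) x)
    (hL : ∀ x ∈ Ioo a b, ∀ y ∈ Ioo a b, |v (k - 1) x - v (k - 1) y| ≤ |x - y|)
    {x : ℝ} (hx : x ∈ Ioo a b) {y : ℝ} (hy : y ∈ Ioo a b) (hyr : |y - x| ≤ tht k * RR k v x) :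
    eta k * RR k v x ≤ RR k v y := by
  obtain ⟨s, hs, h⟩ := scale_low hk hd hL hx
  have h0 := RR_nonneg k v x
  have h1 := h y hy hyr
  have h2 := le_RR_pow v y hs
  have he := eta_pos hk
  have : (eta k * RR k v x) ^ (k - s) ≤ RR k v y ^ (k - s) := by
    refine le_trans ?_ (h1.trans h2)
    rw [mul_pow]
    gcongr
    exact pow_le_of_le_one he.le ((eta_le hk).trans (by norm_num)) (by omega)
  exact le_of_pow_le_pow_left₀ (by omega) (RR_nonneg _ _ _) this

end scale

lemma fubini_avg {a b : ℝ} (hab : a < b) (R : ℝ → ℝ) (F : ℝ → ℝ≥0∞) (hR : Measurable R)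
    (hF : Measurable F) (hR0 : ∀ x, 0 ≤ R x) {θ η κ Γ : ℝ} (hθ : 0 < θ) (hη : 0 < η) (hη1 : η ≤ 1)
    (hκ : 0 < κ) (hΓ : 0 < Γ) (C : ℝ≥0∞)
    (h1 : ∀ x ∈ Ioo a b, 0 < R x →
      ∫⁻ y in Ioo a b ∩ Ioo (x - θ * R x) (x + θ * R x), F y ≤ C * ENNReal.ofReal (R x))
    (h2 : ∀ x ∈ Ioo a b, ∀ y ∈ Ioo a b, |y - x| ≤ θ * R x → η * R x ≤ R y ∧ R y ≤ κ * R x)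
    (h3 : ∀ x ∈ Ioo a b, R x = 0 → F x = 0) (h4 : ∀ x ∈ Ioo a b, R x ≤ Γ * (b - a)) :
    ENNReal.ofReal (min (θ * η) (1 / (2 * Γ)) / κ) * ∫⁻ y in Ioo a b, F y
      ≤ C * ENNReal.ofReal (b - a) := by
  set G : ℝ → ℝ → ℝ≥0∞ := fun x y =>
    {z : ℝ × ℝ | |z.2 - z.1| < θ * R z.1}.indicator
      (fun z => ENNReal.ofReal (1 / R z.1) * F z.2) (x, y) with hG
  have hGm : Measurable (Function.uncurry G) := by
    refine Measurable.indicator (by fun_prop) (measurableSet_lt (by fun_prop) (by fun_prop))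
  have hball : ∀ x y : ℝ, |y - x| < θ * R x ↔ y ∈ Ioo (x - θ * R x) (x + θ * R x) := by
    intro x y
    rw [abs_lt, mem_Ioo]; constructor <;> rintro ⟨u, w⟩ <;> constructor <;> linarith
  have hup : ∫⁻ x in Ioo a b, ∫⁻ y in Ioo a b, G x y ≤ C * ENNReal.ofReal (b - a) := by
    have : ∀ x ∈ Ioo a b, ∫⁻ y in Ioo a b, G x y ≤ C := by
      intro x hx
      have e : ∀ y, G x y = (Ioo (x - θ * R x) (x + θ * R x)).indicator
          (fun y => ENNReal.ofReal (1 / R x) * F y) y := by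
        intro y
        simp only [hG, indicator, mem_ofPred_eq, hball]
      simp_rw [e]
      rw [lintegral_indicator measurableSet_Ioo, Measure.restrict_restrict measurableSet_Ioo,
        inter_comm, lintegral_const_mul _ hF]
      rcases (hR0 x).eq_or_lt with h | h
      · rw [← h]; simp
      · calc _ ≤ ENNReal.ofReal (1 / R x) * (C * ENNReal.ofReal (R x)) := by
              gcongr; exact h1 x hx h
          _ = C * (ENNReal.ofReal (1 / R x) * ENNReal.ofReal (R x)) := by ring
          _ = C := by
            rw [← ENNReal.ofReal_mul (by positivity), one_div, inv_mul_cancel₀ h.ne']; simp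
    calc _ ≤ ∫⁻ x in Ioo a b, C := setLIntegral_mono measurable_const this
      _ = _ := by simp
  have hlow : ∀ y ∈ Ioo a b, ENNReal.ofReal (min (θ * η) (1 / (2 * Γ)) / κ) * F y ≤
      ∫⁻ x in Ioo a b, G x y := by
    intro y hy
    rcases (hR0 y).eq_or_lt with h | h
    · rw [h3 y hy h.symm]; simp
    set r := min (θ * η * R y) ((b - a) / 2) with hr
    have hr0 : 0 < r := lt_min (by positivity) (by linarith)
    have hr1 : r ≤ θ * η * R y := min_le_left _ _
    have hr2 : r ≤ (b - a) / 2 := min_le_right _ _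
    obtain ⟨c, hcI, hcb⟩ : ∃ c, Ioo c (c + r) ⊆ Ioo a b ∧ ∀ x ∈ Ioo c (c + r), |x - y| < r := by
      rcases le_total y ((a + b) / 2) with hh | hh
      · refine ⟨y, fun x hx => ⟨hy.1.trans hx.1, by linarith [hx.2]⟩, fun x hx => ?_⟩
        rw [abs_lt]; constructor <;> linarith [hx.1, hx.2]
      · refine ⟨y - r, fun x hx => ⟨by linarith [hx.1], by linarith [hx.2, hy.2]⟩, fun x hx => ?_⟩
        rw [abs_lt]; constructor <;> linarith [hx.1, hx.2]
    have hpt : ∀ x ∈ Ioo c (c + r), ENNReal.ofReal (1 / (κ * R y)) * F y ≤ G x y := by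
      intro x hx
      have hd := hcb x hx
      have hxI := hcI hx
      have hle : θ * η * R y ≤ θ * R y := by
        have : θ * η ≤ θ := mul_le_of_le_one_right hθ.le hη1
        gcongr
      obtain ⟨h5, h6⟩ := h2 y hy x hxI ((hd.le.trans hr1).trans hle)
      have h7 : |y - x| < θ * R x := by
        rw [abs_sub_comm]
        calc _ < r := hd
          _ ≤ θ * (η * R y) := by linarith
          _ ≤ _ := by gcongr
      have hRx : 0 < R x := lt_of_lt_of_le (by positivity) h5
      have : G x y = ENNReal.ofReal (1 / R x) * F y := by
        simp only [hG, indicator, mem_ofPred_eq, h7, if_true]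
      rw [this]
      gcongr
    calc _ ≤ ENNReal.ofReal (1 / (κ * R y) * r) * F y := by
          gcongr
          rw [div_le_iff₀ hκ]
          have e : 1 / (κ * R y) * r * κ = r / R y := by field_simp
          rw [e, le_div_iff₀ h, hr]
          refine le_min ?_ ?_
          · gcongr; exact min_le_left _ _
          · calc _ ≤ (1 / (2 * Γ)) * (Γ * (b - a)) := by
                  gcongr
                  · exact min_le_right _ _
                  · exact h4 y hy
              _ = _ := by field_simp
      _ = ∫⁻ x in Ioo c (c + r), ENNReal.ofReal (1 / (κ * R y)) * F y := by
          rw [ENNReal.ofReal_mul (by positivity)]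
          simp; ring
      _ ≤ ∫⁻ x in Ioo c (c + r), G x y :=
          setLIntegral_mono (hGm.comp (measurable_id.prodMk measurable_const)) hpt
      _ ≤ _ := lintegral_mono_set hcI
  rw [← lintegral_const_mul _ hF]
  calc _ ≤ ∫⁻ y in Ioo a b, ∫⁻ x in Ioo a b, G x y :=
        setLIntegral_mono' measurableSet_Ioo hlow
    _ = ∫⁻ x in Ioo a b, ∫⁻ y in Ioo a b, G x y :=
        (lintegral_lintegral_swap hGm.aemeasurable).symm
    _ ≤ _ := hup

lemma pow_id1 {R p : ℝ} (hR : 0 < R) {k : ℕ} (hk : 2 ≤ k) :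
    (R ^ (k - 1)) ^ p * (R ^ k) ^ (-(p * (1 - 1 / (k:ℝ)))) = 1 := by
  have hk0 : (k:ℝ) ≠ 0 := by positivity
  rw [← Real.rpow_natCast, ← Real.rpow_natCast, ← Real.rpow_mul hR.le, ← Real.rpow_mul hR.le,
    ← Real.rpow_add hR, Nat.cast_sub (by omega)]
  convert Real.rpow_zero R using 2
  field_simp
  push_cast
  ring

lemma pow_id2 {R p : ℝ} (hR : 0 < R) {k : ℕ} (hk : 2 ≤ k) :
    (R ^ (k - 1)) ^ (p - 1) * (R ^ k) ^ (1 - (p * (1 - 1 / (k:ℝ)))) = R := by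
  have hk0 : (k:ℝ) ≠ 0 := by positivity
  rw [← Real.rpow_natCast, ← Real.rpow_natCast, ← Real.rpow_mul hR.le, ← Real.rpow_mul hR.le,
    ← Real.rpow_add hR, Nat.cast_sub (by omega)]
  convert Real.rpow_one R using 2
  field_simp
  push_cast
  ring

/-- local constant -/
def Cloc (k : ℕ) (p q : ℝ) : ℝ :=
  ((k:ℝ) + 1) ^ p * eta k ^ (-q) * (2 * tht k) +
    2 ^ k * (((k:ℝ) + 1) ^ (p - 1) * (2 * ((k:ℝ) + 1) ^ (1 - q) / (1 - q)))

lemma local_est {k : ℕ} {a b : ℝ} {v : ℕ → ℝ → ℝ} (hk : 2 ≤ k) {p q : ℝ} (hp : 1 ≤ p)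
    (hq : q = p * (1 - 1 / (k:ℝ))) (hq1 : q < 1)
    (hd : ∀ i, i + 1 < k → ∀ x ∈ Ioo a b, HasDerivAt (v i) (v (i + 1) x) x)
    (hL : ∀ x ∈ Ioo a b, ∀ y ∈ Ioo a b, |v (k - 1) x - v (k - 1) y| ≤ |x - y|)
    {x : ℝ} (hx : x ∈ Ioo a b) (hR : 0 < RR k v x) :
    ∫⁻ y in Ioo a b ∩ Ioo (x - tht k * RR k v x) (x + tht k * RR k v x),
      ENNReal.ofReal (|v 1 y| ^ p * |v 0 y| ^ (-q)) ≤
      ENNReal.ofReal (Cloc k p q) * ENNReal.ofReal (RR k v x) := by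
  have hk1 : 1 ≤ k := by omega
  have hkr : (2:ℝ) ≤ k := by exact_mod_cast hk
  have hq0 : 0 < q := by
    rw [hq]; refine mul_pos (by linarith) ?_
    have : 1 / (k:ℝ) ≤ 1 / 2 := by gcongr
    linarith
  have he := eta_pos hk1
  have ht := tht_pos hk1
  set R := RR k v x with hRdef
  have hmem : ∀ y ∈ Ioo a b ∩ Ioo (x - tht k * R) (x + tht k * R),
      y ∈ Ioo a b ∧ |y - x| ≤ tht k * R := by
    intro y hy
    refine ⟨hy.1, ?_⟩
    have := hy.2
    rw [abs_le]; constructor <;> linarith [this.1, this.2]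
  have hthR : tht k * R ≤ R := mul_le_of_le_one_left hR.le (tht_le hk1)
  have hv1 : ∀ y ∈ Ioo a b ∩ Ioo (x - tht k * R) (x + tht k * R), |v 1 y| ≤ (k + 1) * R ^ (k - 1) :=
    fun y hy => scale_bound' hk1 hd hL hx (by omega) hy.1 ((hmem y hy).2.trans hthR)
  have hv0 : ∀ y ∈ Ioo a b ∩ Ioo (x - tht k * R) (x + tht k * R), |v 0 y| ≤ (k + 1) * R ^ k :=
    fun y hy => by
      simpa using scale_bound' hk1 hd hL hx (s := 0) (by omega) hy.1 ((hmem y hy).2.trans hthR)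
  have hmeas : MeasurableSet (Ioo a b ∩ Ioo (x - tht k * R) (x + tht k * R)) :=
    measurableSet_Ioo.inter measurableSet_Ioo
  have hc1 : 0 ≤ ((k:ℝ) + 1) ^ p * eta k ^ (-q) * (2 * tht k) := by positivity
  have h1q : 0 < 1 - q := by linarith
  have hc2 : 0 ≤ 2 ^ k * (((k:ℝ) + 1) ^ (p - 1) * (2 * ((k:ℝ) + 1) ^ (1 - q) / (1 - q))) := by
    positivity
  rw [← ENNReal.ofReal_mul (by unfold Cloc; positivity)]
  obtain ⟨s, hs, hlow⟩ := scale_low hk1 hd hL hx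
  rcases s with _ | t
  · -- function itself is large
    have hpt : ∀ y ∈ Ioo a b ∩ Ioo (x - tht k * R) (x + tht k * R),
        ENNReal.ofReal (|v 1 y| ^ p * |v 0 y| ^ (-q)) ≤
          ENNReal.ofReal (((k:ℝ) + 1) ^ p * eta k ^ (-q)) := by
      intro y hy
      apply ENNReal.ofReal_le_ofReal
      have h1 := hv1 y hy
      have h2 := hlow y hy.1 (hmem y hy).2
      rw [← hRdef, Nat.sub_zero] at h2
      calc _ ≤ ((k + 1) * R ^ (k - 1)) ^ p * (eta k * R ^ k) ^ (-q) := by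
            refine mul_le_mul (Real.rpow_le_rpow (abs_nonneg _) h1 (by linarith)) 
              (Real.rpow_le_rpow_of_nonpos (by positivity) h2 (by linarith))
              (Real.rpow_nonneg (abs_nonneg _) _) (by positivity)
        _ = ((k:ℝ) + 1) ^ p * eta k ^ (-q) * ((R ^ (k - 1)) ^ p * (R ^ k) ^ (-q)) := by
            rw [Real.mul_rpow (by positivity) (by positivity),
              Real.mul_rpow (by positivity) (by positivity)]; ring
        _ = _ := by rw [hq, pow_id1 hR hk, mul_one]
    calc _ ≤ _ := setLIntegral_mono measurable_const hpt
      _ = ENNReal.ofReal (((k:ℝ) + 1) ^ p * eta k ^ (-q)) *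
          volume (Ioo a b ∩ Ioo (x - tht k * R) (x + tht k * R)) := by simp
      _ ≤ ENNReal.ofReal (((k:ℝ) + 1) ^ p * eta k ^ (-q)) * ENNReal.ofReal (2 * tht k * R) := by
          gcongr
          refine (measure_mono inter_subset_right).trans ?_
          rw [Real.volume_Ioo]
          apply ENNReal.ofReal_le_ofReal; linarith
      _ ≤ _ := by
          rw [← ENNReal.ofReal_mul (by positivity)]
          apply ENNReal.ofReal_le_ofReal
          unfold Cloc
          have := mul_nonneg hc2 hR.le
          linarith
  · have hpt : ∀ y ∈ Ioo a b ∩ Ioo (x - tht k * R) (x + tht k * R),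
        ENNReal.ofReal (|v 1 y| ^ p * |v 0 y| ^ (-q)) ≤
          ENNReal.ofReal (((k + 1) * R ^ (k - 1)) ^ (p - 1)) *
            ENNReal.ofReal (|v 1 y| * |v 0 y| ^ (-q)) := by
      intro y hy
      rw [← ENNReal.ofReal_mul (by positivity)]
      apply ENNReal.ofReal_le_ofReal
      have h1 := hv1 y hy
      have e : |v 1 y| ^ p = |v 1 y| ^ (p - 1) * |v 1 y| := by
        rw [← Real.rpow_add_one' (abs_nonneg _) (by linarith)]; simp
      rw [e, mul_assoc]
      have : 0 ≤ |v 1 y| * |v 0 y| ^ (-q) := 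
        mul_nonneg (abs_nonneg _) (Real.rpow_nonneg (abs_nonneg _) _)
      refine mul_le_mul_of_nonneg_right (Real.rpow_le_rpow (abs_nonneg _) h1 (by linarith)) this
    have hB : 0 ≤ (k + 1) * R ^ k := by positivity
    have hpiece := lint_piece q ((k + 1) * R ^ k) hq1 hB v t
      (max a (x - tht k * R)) (min b (x + tht k * R))
    rw [← Ioo_inter_Ioo] at hpiece
    have hpiece := hpiece (fun i hi y hy => hd i (by omega) y hy.1)
      (fun y hy h0 => by
        have := hlow y hy.1 (hmem y hy).2
        rw [h0, abs_zero] at this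
        exact absurd this (not_le.2 (mul_pos he (pow_pos hR _)))) hv0
    calc _ ≤ _ := setLIntegral_mono' hmeas hpt
      _ = _ := lintegral_const_mul' _ _ ENNReal.ofReal_ne_top
      _ ≤ _ := mul_le_mul' le_rfl hpiece
      _ = ENNReal.ofReal (((k + 1) * R ^ (k - 1)) ^ (p - 1) *
          (2 ^ t * (2 * ((k + 1) * R ^ k) ^ (1 - q) / (1 - q)))) := by
          rw [ENNReal.ofReal_mul (by positivity), ENNReal.ofReal_mul (by positivity),
            ENNReal.ofReal_pow (by norm_num)]
          norm_num
      _ ≤ _ := by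
          apply ENNReal.ofReal_le_ofReal
          rw [Real.mul_rpow (by positivity) (by positivity),
              Real.mul_rpow (by positivity) (by positivity)]
          have e := pow_id2 (p := p) hR hk
          rw [← hq] at e
          calc _ = 2 ^ t * (((k:ℝ) + 1) ^ (p - 1) * (2 * ((k:ℝ) + 1) ^ (1 - q) / (1 - q))) *
                ((R ^ (k - 1)) ^ (p - 1) * (R ^ k) ^ (1 - q)) := by ring
            _ = 2 ^ t * (((k:ℝ) + 1) ^ (p - 1) * (2 * ((k:ℝ) + 1) ^ (1 - q) / (1 - q))) * R := by
                rw [e]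
            _ ≤ 2 ^ k * (((k:ℝ) + 1) ^ (p - 1) * (2 * ((k:ℝ) + 1) ^ (1 - q) / (1 - q))) * R := by
                gcongr
                · norm_num
                · omega
            _ ≤ _ := by
                unfold Cloc
                have := mul_nonneg hc1 hR.le
                linarith

/-- core constant -/
def Ccore (k : ℕ) (p q : ℝ) : ℝ :=
  1 + Cloc k p q / (min (tht k * eta k) (1 / (2 * (2 * (k:ℝ)))) / ((k:ℝ) * (k + 1)))

lemma Cloc_nonneg {k : ℕ} (hk : 2 ≤ k) {p q : ℝ} (hq1 : q < 1) : 0 ≤ Cloc k p q := by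
  have he := eta_pos (k := k) (by omega)
  have ht := tht_pos (k := k) (by omega)
  have h1q : 0 < 1 - q := by linarith
  unfold Cloc
  positivity

lemma Ccore_pos {k : ℕ} (hk : 2 ≤ k) {p q : ℝ} (hq1 : q < 1) : 0 < Ccore k p q := by
  have he := eta_pos (k := k) (by omega)
  have ht := tht_pos (k := k) (by omega)
  have hk0 : (0:ℝ) < k := by positivity
  have h := Cloc_nonneg hk (p := p) hq1
  have : 0 < min (tht k * eta k) (1 / (2 * (2 * (k:ℝ)))) := lt_min (by positivity) (by positivity)
  unfold Ccore
  positivity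

lemma core_meas {k : ℕ} {a b : ℝ} (hab : a < b) {v : ℕ → ℝ → ℝ} (hk : 2 ≤ k) {p q : ℝ} (hp : 1 ≤ p)
    (hq : q = p * (1 - 1 / (k:ℝ))) (hq1 : q < 1)
    (hm : ∀ s < k, Measurable (v s))
    (hd : ∀ i, i + 1 < k → ∀ x ∈ Ioo a b, HasDerivAt (v i) (v (i + 1) x) x)
    (hb : ∀ s, 1 ≤ s → s < k → ∀ x ∈ Ioo a b, |v s x| ≤ (b - a) ^ (k - s))
    (hL : ∀ x ∈ Ioo a b, ∀ y ∈ Ioo a b, |v (k - 1) x - v (k - 1) y| ≤ |x - y|) :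
    ∫⁻ y in Ioo a b, ENNReal.ofReal (|v 1 y| ^ p * |v 0 y| ^ (-q)) ≤
      ENNReal.ofReal (Ccore k p q * (b - a)) := by
  have hk1 : 1 ≤ k := by omega
  have hL0 : 0 < b - a := by linarith
  have hkr : (2:ℝ) ≤ k := by exact_mod_cast hk
  have hq0 : 0 < q := by
    rw [hq]; refine mul_pos (by linarith) ?_
    have : 1 / (k:ℝ) ≤ 1 / 2 := by gcongr
    linarith
  have he := eta_pos hk1
  have ht := tht_pos hk1
  have hcl := Cloc_nonneg hk (p := p) hq1
  have hmin : 0 < min (tht k * eta k) (1 / (2 * (2 * (k:ℝ)))) := lt_min (by positivity) (by positivity)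
  by_cases hbig : ∃ x ∈ Ioo a b, 2 * (b - a) ^ k < |v 0 x|
  · obtain ⟨x, hx, hxb⟩ := hbig
    have hpt : ∀ y ∈ Ioo a b, ENNReal.ofReal (|v 1 y| ^ p * |v 0 y| ^ (-q)) ≤ 1 := by
      intro y hy
      rw [← ENNReal.ofReal_one]
      apply ENNReal.ofReal_le_ofReal
      have hyx : |y - x| ≤ b - a := by
        rw [abs_le]; constructor <;> linarith [hx.1, hx.2, hy.1, hy.2]
      have h1 := mvt_aux (hd 0 (by omega)) hx hL0.le (M := (b - a) ^ (k - 1))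
        (fun z hz _ => hb 1 le_rfl (by omega) z hz) y hy hyx
      have h2 : (b - a) ^ (k - 1) * |y - x| ≤ (b - a) ^ k := by
        calc _ ≤ (b - a) ^ (k - 1) * (b - a) := by gcongr
          _ = _ := by rw [← pow_succ]; congr 1; omega
      have h3 := abs_sub_abs_le_abs_sub (v 0 x) (v 0 y)
      rw [abs_sub_comm] at h3
      have h4 : (b - a) ^ k ≤ |v 0 y| := by linarith
      calc _ ≤ ((b - a) ^ (k - 1)) ^ p * ((b - a) ^ k) ^ (-q) := by
            refine mul_le_mul (Real.rpow_le_rpow (abs_nonneg _) (hb 1 le_rfl (by omega) y hy) (by linarith)) 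
              (Real.rpow_le_rpow_of_nonpos (by positivity) h4 (by linarith))
              (Real.rpow_nonneg (abs_nonneg _) _) (by positivity)
        _ = 1 := by rw [hq, pow_id1 hL0 hk]
    calc _ ≤ _ := setLIntegral_mono measurable_const hpt
      _ = ENNReal.ofReal (b - a) := by simp
      _ ≤ _ := by
        apply ENNReal.ofReal_le_ofReal
        refine le_mul_of_one_le_left hL0.le ?_
        unfold Ccore
        have : 0 ≤ Cloc k p q / (min (tht k * eta k) (1 / (2 * (2 * (k:ℝ)))) / ((k:ℝ) * (k + 1))) := by
          positivity
        linarith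
  · push Not at hbig
    have hm0 := hm 0 (by omega)
    have hm1 := hm 1 (by omega)
    have hRm : Measurable (RR k v) := by
      unfold RR
      refine Finset.measurable_sum _ fun s hs => ?_
      have := hm s (Finset.mem_range.1 hs)
      fun_prop
    have hf := fubini_avg hab (RR k v) (fun y => ENNReal.ofReal (|v 1 y| ^ p * |v 0 y| ^ (-q))) hRm
      (by fun_prop) (RR_nonneg k v) ht he ((eta_le hk1).trans (by norm_num))
      (κ := (k:ℝ) * (k + 1)) (Γ := 2 * k) (by positivity) (by positivity) (ENNReal.ofReal (Cloc k p q))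
      (fun x hx hR => local_est hk hp hq hq1 hd hL hx hR)
      (fun x hx y hy h => ⟨RR_lower hk1 hd hL hx hy h, by
        have := RR_upper hk1 hd hL hx hy h
        linarith⟩)
      (fun x hx h => by
        have := le_RR_pow (k := k) v x (s := 0) (by omega)
        rw [h, Nat.sub_zero, zero_pow (by omega)] at this
        have : |v 0 x| = 0 := le_antisymm this (abs_nonneg _)
        simp only [this]
        rw [Real.zero_rpow (by linarith)]; simp)
      (fun x hx => by
        have := RR_le_of (k := k) v x (M := 2 * (b - a)) (by positivity) (fun s hs => by
          rcases s with _ | s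
          · refine (hbig x hx).trans ?_
            rw [mul_pow, Nat.sub_zero]
            gcongr
            exact le_self_pow₀ (by norm_num) (by omega)
          · refine (hb (s + 1) (by omega) hs x hx).trans ?_
            gcongr
            linarith)
        linarith)
    set c := min (tht k * eta k) (1 / (2 * (2 * (k:ℝ)))) / ((k:ℝ) * (k + 1)) with hc
    have hc0 : 0 < c := by positivity
    set X := ∫⁻ y in Ioo a b, ENNReal.ofReal (|v 1 y| ^ p * |v 0 y| ^ (-q))
    calc X = ENNReal.ofReal (1 / c) * (ENNReal.ofReal c * X) := by
          rw [← mul_assoc, ← ENNReal.ofReal_mul (by positivity), one_div, inv_mul_cancel₀ hc0.ne']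
          simp
      _ ≤ ENNReal.ofReal (1 / c) * (ENNReal.ofReal (Cloc k p q) * ENNReal.ofReal (b - a)) := by
          gcongr
      _ = ENNReal.ofReal (1 / c * (Cloc k p q * (b - a))) := by
          rw [ENNReal.ofReal_mul (by positivity), ENNReal.ofReal_mul hcl]
      _ ≤ _ := by
          apply ENNReal.ofReal_le_ofReal
          have : Ccore k p q = 1 + Cloc k p q / c := rfl
          rw [this]
          have : 1 / c * (Cloc k p q * (b - a)) = Cloc k p q / c * (b - a) := by ring
          rw [this]; linarith

lemma core {k : ℕ} {a b : ℝ} (hab : a < b) {v : ℕ → ℝ → ℝ} (hk : 2 ≤ k) {p q : ℝ} (hp : 1 ≤ p)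
    (hq : q = p * (1 - 1 / (k:ℝ))) (hq1 : q < 1)
    (hd : ∀ i, i + 1 < k → ∀ x ∈ Ioo a b, HasDerivAt (v i) (v (i + 1) x) x)
    (hb : ∀ s, 1 ≤ s → s < k → ∀ x ∈ Ioo a b, |v s x| ≤ (b - a) ^ (k - s))
    (hL : ∀ x ∈ Ioo a b, ∀ y ∈ Ioo a b, |v (k - 1) x - v (k - 1) y| ≤ |x - y|) :
    ∫⁻ y in Ioo a b, ENNReal.ofReal (|v 1 y| ^ p * |v 0 y| ^ (-q)) ≤
      ENNReal.ofReal (Ccore k p q * (b - a)) := by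
  set w : ℕ → ℝ → ℝ := fun s => (Ioo a b).indicator (v s) with hw
  have e : ∀ s, ∀ x ∈ Ioo a b, w s x = v s x := fun s x hx => indicator_of_mem hx _
  have hcont : ∀ s < k, ContinuousOn (v s) (Ioo a b) := by
    intro s hs
    rcases Nat.lt_or_ge (s + 1) k with h | h
    · exact fun x hx => (hd s h x hx).continuousAt.continuousWithinAt
    · have : s = k - 1 := by omega
      subst this
      have : LipschitzOnWith 1 (v (k - 1)) (Ioo a b) :=
        LipschitzOnWith.of_dist_le_mul fun x hx y hy => by
          simpa [Real.dist_eq] using hL x hx y hy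
      exact this.continuousOn
  have := core_meas hab (v := w) hk hp hq hq1
    (fun s hs => by
      rw [hw]
      have := (hcont s hs).measurable_piecewise (g := 0) (continuousOn_const) measurableSet_Ioo
      rw [Set.piecewise_eq_indicator] at this
      exact this)
    (fun i hi x hx => by
      rw [e _ x hx]
      refine (hd i hi x hx).congr_of_eventuallyEq ?_
      filter_upwards [isOpen_Ioo.mem_nhds hx] with y hy using e i y hy)
    (fun s h1 h2 x hx => by rw [e _ x hx]; exact hb s h1 h2 x hx)
    (fun x hx y hy => by rw [e _ x hx, e _ y hy]; exact hL x hx y hy)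
  refine le_trans (le_of_eq ?_) this
  refine setLIntegral_congr_fun measurableSet_Ioo fun y hy => ?_
  simp only [e _ y hy]

lemma root_hasDerivAt {k : ℕ} (hk : 1 ≤ k) {f β : ℝ → ℂ} {β' : ℂ} {t : ℝ} (hf : ContinuousAt f t)
    (hβ : HasDerivAt β β' t) (he : ∀ᶠ y in 𝓝 t, f y ^ k = β y) (h0 : f t ≠ 0) :
    HasDerivAt f (β' / (k * f t ^ (k - 1))) t := by
  set S : ℝ → ℂ := fun y => ∑ i ∈ Finset.range k, f y ^ i * f t ^ (k - 1 - i) with hS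
  have hSc : ContinuousAt S t := by
    rw [hS]; fun_prop
  have hSt : S t = k * f t ^ (k - 1) := by
    rw [hS]
    have : ∀ i ∈ Finset.range k, f t ^ i * f t ^ (k - 1 - i) = f t ^ (k - 1) := by
      intro i hi
      have := Finset.mem_range.1 hi
      rw [← pow_add]; congr 1; omega
    simp only
    rw [Finset.sum_congr rfl this]; simp
  have hk0 : (k:ℂ) ≠ 0 := by exact_mod_cast (by omega : k ≠ 0)
  have hS0 : S t ≠ 0 := by rw [hSt]; exact mul_ne_zero hk0 (pow_ne_zero _ h0)
  rw [hasDerivAt_iff_tendsto_slope] at hβ ⊢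
  rw [← hSt]
  refine Tendsto.congr' ?_ (hβ.div (hSc.tendsto.mono_left nhdsWithin_le_nhds) hS0)
  have h1 := hSc.eventually_ne hS0
  have h2 := he.self_of_nhds
  filter_upwards [nhdsWithin_le_nhds h1, nhdsWithin_le_nhds he] with y hy1 hy2
  simp only [slope, vsub_eq_sub, Pi.div_apply]
  rw [← hy2, ← h2, ← geom_sum₂_mul, div_eq_iff hy1, smul_mul_assoc]
  rw [mul_comm (f y - f t)]

lemma phi_est {k : ℕ} {a b : ℝ} (hab : a < b) {β : ℕ → ℝ → ℂ} (hk : 2 ≤ k) {p q M : ℝ} (hp : 1 ≤ p)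
    (hq : q = p * (1 - 1 / (k:ℝ))) (hq1 : q < 1) (hM : 0 < M)
    (hd : ∀ i, i + 1 < k → ∀ x ∈ Ioo a b, HasDerivAt (β i) (β (i + 1) x) x)
    (hb : ∀ s, 1 ≤ s → s < k → ∀ x ∈ Ioo a b, ‖β s x‖ ≤ M * (b - a) ^ (k - s))
    (hL : ∀ x ∈ Ioo a b, ∀ y ∈ Ioo a b, ‖β (k - 1) x - β (k - 1) y‖ ≤ M * |x - y|)
    (φ : ℂ →L[ℝ] ℝ) (hφ : ∀ z, |φ z| ≤ ‖z‖) :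
    ∫⁻ y in Ioo a b, ENNReal.ofReal (|φ (β 1 y)| ^ p * ‖β 0 y‖ ^ (-q)) ≤
      ENNReal.ofReal (M ^ (p / k) * (Ccore k p q * (b - a))) := by
  have hkr : (2:ℝ) ≤ k := by exact_mod_cast hk
  have hq0 : 0 < q := by
    rw [hq]; refine mul_pos (by linarith) ?_
    have : 1 / (k:ℝ) ≤ 1 / 2 := by gcongr
    linarith
  set u : ℕ → ℝ → ℝ := fun s x => M⁻¹ * φ (β s x) with hu
  have habs : ∀ s x, |u s x| = M⁻¹ * |φ (β s x)| := by
    intro s x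
    rw [hu]; simp only
    rw [abs_mul, abs_of_pos (inv_pos.2 hM)]
  have hdφ : ∀ i, i + 1 < k → ∀ x ∈ Ioo a b,
      HasDerivAt (fun x => φ (β i x)) (φ (β (i + 1) x)) x := fun i hi x hx =>
    φ.hasFDerivAt.comp_hasDerivAt x (hd i hi x hx)
  have hcore := core hab (v := u) hk hp hq hq1
    (fun i hi x hx => (hdφ i hi x hx).const_mul _)
    (fun s h1 h2 x hx => by
      rw [habs, inv_mul_le_iff₀ hM]
      exact (hφ _).trans (hb s h1 h2 x hx))
    (fun x hx y hy => by
      have : u (k - 1) x - u (k - 1) y = M⁻¹ * φ (β (k-1) x - β (k-1) y) := by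
        rw [hu, map_sub]; ring
      rw [this, abs_mul, abs_of_pos (inv_pos.2 hM), inv_mul_le_iff₀ hM]
      exact (hφ _).trans (hL x hx y hy))
  have hae : ∀ᵐ y ∂(volume.restrict (Ioo a b)),
      ENNReal.ofReal (|φ (β 1 y)| ^ p * ‖β 0 y‖ ^ (-q)) ≤
        ENNReal.ofReal (M ^ (p / k)) * ENNReal.ofReal (|u 1 y| ^ p * |u 0 y| ^ (-q)) := by
    rw [ae_restrict_iff' measurableSet_Ioo]
    filter_upwards [ae_deriv_zero (fun x => φ (β 0 x))] with y hy0 hy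
    rw [← ENNReal.ofReal_mul (by positivity)]
    apply ENNReal.ofReal_le_ofReal
    by_cases h : φ (β 0 y) = 0
    · have h1 := hy0 h _ (hdφ 0 (by omega) y hy)
      simp only [zero_add] at h1
      rw [h1, abs_zero, Real.zero_rpow (by linarith), zero_mul]
      positivity
    · have hpos : 0 < |φ (β 0 y)| := abs_pos.2 h
      have e : M ^ (p / k) * (|u 1 y| ^ p * |u 0 y| ^ (-q)) =
          |φ (β 1 y)| ^ p * |φ (β 0 y)| ^ (-q) := by
        rw [habs, habs, Real.mul_rpow (by positivity) (by positivity),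
          Real.mul_rpow (by positivity) (by positivity), Real.inv_rpow hM.le, Real.inv_rpow hM.le,
          ← Real.rpow_neg hM.le, ← Real.rpow_neg hM.le]
        have : M ^ (p / k) * (M ^ (-p) * M ^ (- -q)) = 1 := by
          rw [← Real.rpow_add hM, ← Real.rpow_add hM, hq]
          convert Real.rpow_zero M using 2
          field_simp
          ring
        linear_combination (|φ (β 1 y)| ^ p * |φ (β 0 y)| ^ (-q)) * this
      rw [e]
      refine mul_le_mul_of_nonneg_left ?_ (by positivity)
      exact Real.rpow_le_rpow_of_nonpos hpos (hφ _) (by linarith)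
  calc _ ≤ _ := lintegral_mono_ae hae
    _ = _ := lintegral_const_mul' _ _ ENNReal.ofReal_ne_top
    _ ≤ _ := mul_le_mul' le_rfl hcore
    _ = _ := by rw [ENNReal.ofReal_mul (p := M ^ (p / k)) (by positivity)]

lemma cplx_est {k : ℕ} {a b : ℝ} (hab : a < b) {β : ℕ → ℝ → ℂ} (hk : 2 ≤ k) {p q M : ℝ} (hp : 1 ≤ p)
    (hq : q = p * (1 - 1 / (k:ℝ))) (hq1 : q < 1) (hM : 0 < M)
    (hd : ∀ i, i + 1 < k → ∀ x ∈ Ioo a b, HasDerivAt (β i) (β (i + 1) x) x)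
    (hb : ∀ s, 1 ≤ s → s < k → ∀ x ∈ Ioo a b, ‖β s x‖ ≤ M * (b - a) ^ (k - s))
    (hL : ∀ x ∈ Ioo a b, ∀ y ∈ Ioo a b, ‖β (k - 1) x - β (k - 1) y‖ ≤ M * |x - y|)
    {f : ℝ → ℂ} (hf : ContinuousOn f (Ioo a b)) (hfk : ∀ t ∈ Ioo a b, f t ^ k = β 0 t) :
    ∫⁻ y in Ioo a b, ENNReal.ofReal (‖deriv f y‖ ^ p) ≤
      ENNReal.ofReal (2 ^ p * (2 * (M ^ (p / k) * (Ccore k p q * (b - a))))) := by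
  have hkr : (2:ℝ) ≤ k := by exact_mod_cast hk
  have hC := Ccore_pos hk (p := p) hq1
  have hre := phi_est hab hk hp hq hq1 hM hd hb hL Complex.reCLM (fun z => Complex.abs_re_le_norm z)
  have him := phi_est hab hk hp hq hq1 hM hd hb hL Complex.imCLM (fun z => Complex.abs_im_le_norm z)
  have hcont0 : ContinuousOn (β 0) (Ioo a b) :=
    fun x hx => (hd 0 (by omega) x hx).continuousAt.continuousWithinAt
  have hae : ∀ᵐ y ∂(volume.restrict (Ioo a b)), ENNReal.ofReal (‖deriv f y‖ ^ p) ≤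
      ENNReal.ofReal (2 ^ p) *
        (ENNReal.ofReal (|Complex.reCLM (β 1 y)| ^ p * ‖β 0 y‖ ^ (-q)) +
         ENNReal.ofReal (|Complex.imCLM (β 1 y)| ^ p * ‖β 0 y‖ ^ (-q))) := by
    rw [ae_restrict_iff' measurableSet_Ioo]
    filter_upwards [ae_deriv_zero f] with y hy0 hy
    rw [← ENNReal.ofReal_add (by positivity) (by positivity), ← ENNReal.ofReal_mul (by positivity)]
    apply ENNReal.ofReal_le_ofReal
    by_cases h : f y = 0
    · have : deriv f y = 0 := by
        by_cases hdf : DifferentiableAt ℝ f y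
        · exact hy0 h _ hdf.hasDerivAt
        · exact deriv_zero_of_not_differentiableAt hdf
      rw [this, norm_zero, Real.zero_rpow (by linarith)]
      positivity
    · have hnhds := isOpen_Ioo.mem_nhds hy
      have hder := root_hasDerivAt (k := k) (by omega) (hf.continuousAt hnhds) (hd 0 (by omega) y hy)
        (by filter_upwards [hnhds] with t ht using hfk t ht) h
      have hfpos : 0 < ‖f y‖ := norm_pos_iff.2 h
      have hβ : ‖β 0 y‖ = ‖f y‖ ^ k := by rw [← hfk y hy, norm_pow]
      have h1 : ‖deriv f y‖ ≤ ‖β 1 y‖ * (‖f y‖ ^ (k - 1))⁻¹ := by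
        rw [hder.deriv, norm_div, norm_mul, norm_pow, div_eq_mul_inv]
        simp only [zero_add]
        have : ‖(k:ℂ)‖ = k := by simp
        rw [this]
        gcongr
        exact le_mul_of_one_le_left (by positivity) (by linarith)
      have h2 : ‖deriv f y‖ ^ p ≤ ‖β 1 y‖ ^ p * ‖β 0 y‖ ^ (-q) := by
        calc _ ≤ (‖β 1 y‖ * (‖f y‖ ^ (k - 1))⁻¹) ^ p :=
              Real.rpow_le_rpow (norm_nonneg _) h1 (by linarith)
          _ = ‖β 1 y‖ ^ p * ((‖f y‖ ^ (k - 1)) ^ p)⁻¹ := by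
              rw [Real.mul_rpow (by positivity) (by positivity), Real.inv_rpow (by positivity)]
          _ = _ := by
              congr 1
              have := pow_id1 (p := p) hfpos hk
              rw [← hq, ← hβ] at this
              exact inv_eq_of_mul_eq_one_right this
      have h3 : ‖β 1 y‖ ^ p ≤ 2 ^ p * (|Complex.reCLM (β 1 y)| ^ p + |Complex.imCLM (β 1 y)| ^ p) := by
        have h4 := Complex.norm_le_abs_re_add_abs_im (β 1 y)
        simp only [Complex.reCLM_apply, Complex.imCLM_apply]
        set r := |(β 1 y).re|
        set i := |(β 1 y).im|
        have hr : 0 ≤ r := abs_nonneg _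
        have hi : 0 ≤ i := abs_nonneg _
        have h5 : ‖β 1 y‖ ≤ 2 * max r i := by linarith [le_max_left r i, le_max_right r i]
        calc _ ≤ (2 * max r i) ^ p := Real.rpow_le_rpow (norm_nonneg _) h5 (by linarith)
          _ = 2 ^ p * (max r i) ^ p := Real.mul_rpow (by norm_num) (le_max_of_le_left hr)
          _ ≤ _ := by
            gcongr
            have := Real.rpow_nonneg hr p
            have := Real.rpow_nonneg hi p
            rcases max_choice r i with h | h <;> rw [h] <;> linarith
      calc _ ≤ _ := h2
        _ ≤ 2 ^ p * (|Complex.reCLM (β 1 y)| ^ p + |Complex.imCLM (β 1 y)| ^ p) * ‖β 0 y‖ ^ (-q) := by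
          gcongr
        _ = _ := by ring
  have hX : 0 ≤ M ^ (p / k) * (Ccore k p q * (b - a)) := by
    have : 0 < b - a := by linarith
    positivity
  have hm0 : AEMeasurable (β 0) (volume.restrict (Ioo a b)) := hcont0.aemeasurable measurableSet_Ioo
  have hm1 : AEMeasurable (β 1) (volume.restrict (Ioo a b)) := by
    have hcongr : (fun x => deriv (β 0) x) =ᵐ[volume.restrict (Ioo a b)] β 1 := by
      refine (ae_restrict_iff' measurableSet_Ioo).2 (Eventually.of_forall fun x hx => ?_)
      exact (hd 0 (by omega) x hx).deriv
    exact (measurable_deriv (β 0)).aemeasurable.congr hcongr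
  calc _ ≤ _ := lintegral_mono_ae hae
    _ = _ := lintegral_const_mul' _ _ ENNReal.ofReal_ne_top
    _ = _ := by rw [lintegral_add_left' (by fun_prop)]
    _ ≤ _ := mul_le_mul' le_rfl (add_le_add hre him)
    _ = _ := by rw [← ENNReal.ofReal_add hX hX, ← ENNReal.ofReal_mul (by positivity), two_mul]

lemma seg_bound {u v : ℝ} (huv : u ≤ v) {f : ℝ → ℂ} (hf : ContinuousOn f (Icc u v))
    (hd : ∀ x ∈ Ioo u v, DifferentiableAt ℝ f x)
    (hi : ∫⁻ y in Ioo u v, ‖deriv f y‖ₑ ≠ ∞) :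
    ‖f v - f u‖ₑ ≤ ∫⁻ y in Ioo u v, ‖deriv f y‖ₑ := by
  have hint : IntegrableOn (deriv f) (Ioo u v) :=
    ⟨(measurable_deriv f).aestronglyMeasurable, lt_top_iff_ne_top.2 hi⟩
  have hI : IntervalIntegrable (deriv f) volume u v := by
    rw [intervalIntegrable_iff_integrableOn_Ioo_of_le huv]; exact hint
  have := intervalIntegral.integral_eq_sub_of_hasDerivAt_of_le huv hf
    (fun x hx => (hd x hx).hasDerivAt) hI
  rw [← this, intervalIntegral.integral_of_le huv, integral_Ioc_eq_integral_Ioo]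
  exact enorm_integral_le_lintegral_enorm _

lemma seg_bound' {u v : ℝ} (huv : u ≤ v) {f : ℝ → ℂ} (hf : ContinuousOn f (Icc u v))
    (hd : ∀ x ∈ Ioo u v, f x ≠ 0 → DifferentiableAt ℝ f x)
    (hi : ∫⁻ y in Ioo u v, ‖deriv f y‖ₑ ≠ ∞) :
    ‖f v - f u‖ₑ ≤ ∫⁻ y in Ioo u v, ‖deriv f y‖ₑ := by
  have hcl : IsCompact (Icc u v ∩ f ⁻¹' {0}) :=
    isCompact_Icc.of_isClosed_subset
      (hf.preimage_isClosed_of_isClosed isClosed_Icc isClosed_singleton) inter_subset_left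
  by_cases hne : (Icc u v ∩ f ⁻¹' {0}).Nonempty
  · obtain ⟨z1, ⟨hz1, hz10⟩, hmin⟩ := hcl.exists_isLeast hne
    obtain ⟨z2, ⟨hz2, hz20⟩, hmax⟩ := hcl.exists_isGreatest hne
    have h12 : z1 ≤ z2 := hmin ⟨hz2, hz20⟩
    have hz10 : f z1 = 0 := hz10
    have hz20 : f z2 = 0 := hz20
    have s1 : Ioo u z1 ⊆ Ioo u v := Ioo_subset_Ioo_right hz1.2
    have s2 : Ioo z2 v ⊆ Ioo u v := Ioo_subset_Ioo_left hz2.1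
    have b1 := seg_bound hz1.1 (f := f) (hf.mono (Icc_subset_Icc_right hz1.2))
      (fun x hx => hd x (s1 hx) fun h0 =>
        absurd (hmin ⟨⟨hx.1.le, hx.2.le.trans hz1.2⟩, h0⟩) (not_le.2 hx.2))
      (ne_top_of_le_ne_top hi (lintegral_mono_set s1))
    have b2 := seg_bound hz2.2 (f := f) (hf.mono (Icc_subset_Icc_left hz2.1))
      (fun x hx => hd x (s2 hx) fun h0 =>
        absurd (hmax ⟨⟨hz2.1.trans hx.1.le, hx.2.le⟩, h0⟩) (not_le.2 hx.1))
      (ne_top_of_le_ne_top hi (lintegral_mono_set s2))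
    have e : f v - f u = (f z1 - f u) + (f v - f z2) := by rw [hz10, hz20]; ring
    rw [e]
    refine (enorm_add_le _ _).trans ((add_le_add b1 b2).trans ?_)
    rw [← lintegral_union measurableSet_Ioo]
    · exact lintegral_mono_set (union_subset s1 s2)
    · rw [Set.disjoint_left]
      intro x hx hx'
      linarith [hx.2, hx'.1]
  · rw [Set.not_nonempty_iff_eq_empty] at hne
    refine seg_bound huv hf (fun x hx => hd x hx fun h0 => ?_) hi
    have : x ∈ Icc u v ∩ f ⁻¹' {0} := ⟨Ioo_subset_Icc_self hx, h0⟩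
    rw [hne] at this
    exact this

lemma ac_of {a b : ℝ} {f : ℝ → ℂ} (hf : ContinuousOn f (Ioo a b))
    (hd : ∀ x ∈ Ioo a b, f x ≠ 0 → DifferentiableAt ℝ f x)
    (hi : ∫⁻ y in Ioo a b, ‖deriv f y‖ₑ ≠ ∞) : AbsContOn f (Ioo a b) := by
  intro ε hε
  obtain ⟨δ, hδ, h⟩ := exists_pos_setLIntegral_lt_of_measure_lt hi
    (ε := ENNReal.ofReal ε) (by simpa using hε)
  obtain ⟨δ', hδ'0, hδ'⟩ : ∃ δ' : ℝ, 0 < δ' ∧ ENNReal.ofReal δ' ≤ δ := by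
    refine ⟨(min δ 1).toReal, ENNReal.toReal_pos (lt_min hδ one_pos).ne'
      (ne_top_of_le_ne_top ENNReal.one_ne_top (min_le_right _ _)), ?_⟩
    rw [ENNReal.ofReal_toReal (ne_top_of_le_ne_top ENNReal.one_ne_top (min_le_right _ _))]
    exact min_le_left _ _
  refine ⟨δ', hδ'0, fun N u v huv hdisj hsum => ?_⟩
  have hsub : ∀ i, Ioo (u i) (v i) ⊆ Ioo a b := fun i => Ioo_subset_Icc_self.trans (huv i).2
  have hU : (⋃ i, Ioo (u i) (v i)) ⊆ Ioo a b := iUnion_subset hsub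
  have hUm : MeasurableSet (⋃ i, Ioo (u i) (v i)) := MeasurableSet.iUnion fun i => measurableSet_Ioo
  have hvol : (volume.restrict (Ioo a b)) (⋃ i, Ioo (u i) (v i)) < δ := by
    rw [Measure.restrict_apply hUm, inter_eq_left.2 hU]
    calc _ ≤ ∑ i, volume (Ioo (u i) (v i)) := measure_iUnion_fintype_le _ _
      _ = ENNReal.ofReal (∑ i, (v i - u i)) := by
        rw [ENNReal.ofReal_sum_of_nonneg fun i _ => sub_nonneg.2 (huv i).1]
        simp
      _ < ENNReal.ofReal δ' := (ENNReal.ofReal_lt_ofReal_iff hδ'0).2 hsum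
      _ ≤ δ := hδ'
  have h1 := h _ hvol
  rw [Measure.restrict_restrict hUm, inter_eq_left.2 hU,
    lintegral_iUnion (fun i => measurableSet_Ioo) (fun i j hij => hdisj i j hij), tsum_fintype] at h1
  have h2 : ENNReal.ofReal (∑ i, ‖f (v i) - f (u i)‖) < ENNReal.ofReal ε := by
    refine lt_of_le_of_lt ?_ h1
    rw [ENNReal.ofReal_sum_of_nonneg fun i _ => norm_nonneg _]
    refine Finset.sum_le_sum fun i _ => ?_
    rw [ofReal_norm]
    exact seg_bound' (huv i).1 (hf.mono (huv i).2) (fun x hx => hd x (hsub i hx))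
      (ne_top_of_le_ne_top hi (lintegral_mono_set (hsub i)))
  exact (ENNReal.ofReal_lt_ofReal_iff hε).1 h2

/-- constant for one index -/
def Cone (C₀ : ℝ) (k : ℕ) (p q : ℝ) : ℝ := C₀ ^ (1 / (k:ℝ)) * (2 ^ p * (2 * Ccore k p q)) ^ (1 / p)

lemma one_index {n k : ℕ} (hk : 2 ≤ k) (hkn : k ≤ n) {C₀ : ℝ} (hC₀ : 0 < C₀) {p q : ℝ} (hp : 1 ≤ p)
    (hq : q = p * (1 - 1 / (k:ℝ))) (hq1 : q < 1) {a b A : ℝ} (hab : a < b) (hA : 0 < A)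
    {β : ℕ → ℝ → ℂ} (hmem : MemCk1 β (n - 1) (Icc a b))
    (hb : ∀ s : ℕ, 1 ≤ s → s ≤ n - 1 → ∀ t ∈ Ioo a b, ‖β s t‖ ≤ C₀ * ((b - a) ^ s)⁻¹ * A ^ k)
    (hL : ∀ x ∈ Ioo a b, ∀ y ∈ Ioo a b,
        ‖β (n - 1) x - β (n - 1) y‖ ≤ C₀ * ((b - a) ^ n)⁻¹ * A ^ k * |x - y|)
    {f : ℝ → ℂ} (hf : ContinuousOn f (Ioo a b)) (hfk : ∀ t ∈ Ioo a b, f t ^ k = β 0 t) :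
    AbsContOn f (Ioo a b) ∧
      IntegrableOn (fun t => ‖deriv f t‖ ^ p) (Ioo a b) volume ∧
      (∫ t in Ioo a b, ‖deriv f t‖ ^ p) ^ (1 / p) ≤ Cone C₀ k p q * (b - a) ^ (-1 + 1 / p) * A := by
  have hL0 : 0 < b - a := by linarith
  have hkr : (2:ℝ) ≤ k := by exact_mod_cast hk
  have hd : ∀ i, i < n - 1 → ∀ x ∈ Ioo a b, HasDerivAt (β i) (β (i + 1) x) x := fun i hi x hx =>
    (hmem.1 i hi x (Ioo_subset_Icc_self hx)).hasDerivAt (Icc_mem_nhds hx.1 hx.2)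
  set M := C₀ * ((b - a) ^ k)⁻¹ * A ^ k with hMdef
  have hM : 0 < M := by positivity
  have hd' : ∀ i, i + 1 < k → ∀ x ∈ Ioo a b, HasDerivAt (β i) (β (i + 1) x) x :=
    fun i hi => hd i (by omega)
  have hb' : ∀ s, 1 ≤ s → s < k → ∀ x ∈ Ioo a b, ‖β s x‖ ≤ M * (b - a) ^ (k - s) := by
    intro s h1 h2 x hx
    refine (hb s h1 (by omega) x hx).trans (le_of_eq ?_)
    have : (b - a) ^ k = (b - a) ^ (k - s) * (b - a) ^ s := by rw [← pow_add]; congr 1; omega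
    rw [hMdef, this]; field_simp
  have hL' : ∀ x ∈ Ioo a b, ∀ y ∈ Ioo a b, ‖β (k - 1) x - β (k - 1) y‖ ≤ M * |x - y| := by
    rcases hkn.eq_or_lt with h | h
    · subst h; exact hL
    · intro x hx y hy
      have := (convex_Ioo a b).norm_image_sub_le_of_norm_hasDerivWithin_le (f := β (k - 1))
        (f' := β k) (C := M) (fun z hz => by
          have := hd (k - 1) (by omega) z hz
          rw [show k - 1 + 1 = k by omega] at this
          exact this.hasDerivWithinAt) (fun z hz => hb k (by omega) (by omega) z hz) hy hx
      simpa using this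
  have hest := cplx_est hab hk hp hq hq1 hM hd' hb' hL' hf hfk
  have hk1 : (0:ℝ) < 1 / k := by positivity
  have hest1 := cplx_est (p := 1) (q := 1 - 1 / (k:ℝ)) hab hk le_rfl (by ring) (by linarith)
    hM hd' hb' hL' hf hfk
  have hmeas : AEStronglyMeasurable (fun t => ‖deriv f t‖ ^ p) (volume.restrict (Ioo a b)) := by
    have := measurable_deriv f
    exact (by fun_prop : Measurable (fun t => ‖deriv f t‖ ^ p)).aestronglyMeasurable
  have hnn : ∀ t, 0 ≤ ‖deriv f t‖ ^ p := fun t => by positivity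
  have hC := Ccore_pos hk (p := p) hq1
  refine ⟨ac_of hf ?_ ?_, ?_, ?_⟩
  · intro x hx h0
    have hnhds := isOpen_Ioo.mem_nhds hx
    exact (root_hasDerivAt (k := k) (by omega) (hf.continuousAt hnhds) (hd' 0 (by omega) x hx)
        (by filter_upwards [hnhds] with t ht using hfk t ht) h0).differentiableAt
  · refine ne_top_of_le_ne_top ENNReal.ofReal_ne_top (le_trans (le_of_eq ?_) hest1)
    refine lintegral_congr fun t => ?_
    rw [Real.rpow_one, ofReal_norm]
  · refine ⟨hmeas, ?_⟩
    rw [hasFiniteIntegral_iff_ofReal (Eventually.of_forall hnn)]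
    exact lt_of_le_of_lt hest ENNReal.ofReal_lt_top
  · rw [integral_eq_lintegral_of_nonneg_ae (Eventually.of_forall hnn) hmeas]
    have h1 := ENNReal.toReal_mono ENNReal.ofReal_ne_top hest
    rw [ENNReal.toReal_ofReal (by positivity)] at h1
    calc _ ≤ _ := Real.rpow_le_rpow ENNReal.toReal_nonneg h1 (by positivity)
      _ = ((2 ^ p * (2 * Ccore k p q)) * (M ^ (p / k) * (b - a))) ^ (1 / p) := by congr 1; ring
      _ = (2 ^ p * (2 * Ccore k p q)) ^ (1 / p) * ((M ^ (p / k)) ^ (1 / p) * (b - a) ^ (1 / p)) := by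
        rw [Real.mul_rpow (by positivity) (by positivity),
          Real.mul_rpow (x := M ^ (p / k)) (y := b - a) (by positivity) (by positivity)]
      _ = _ := by
        have e1 : (M ^ (p / k)) ^ (1 / p) = C₀ ^ (1 / (k:ℝ)) * (b - a)⁻¹ * A := by
          rw [← Real.rpow_mul hM.le, show p / k * (1 / p) = (k:ℝ)⁻¹ by field_simp, hMdef,
            ← inv_pow, Real.mul_rpow (by positivity) (by positivity),
            Real.mul_rpow (by positivity) (by positivity),
            Real.pow_rpow_inv_natCast (by positivity) (by omega),
            Real.pow_rpow_inv_natCast (by positivity) (by omega), one_div]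
        rw [e1, Real.rpow_add hL0, Real.rpow_neg_one]
        unfold Cone
        ring

end Helpers

/-- **Lemma lem:Lpbak.** If `b_i ∈ C^{n-1,1}(Ī)` satisfies
`‖b_i^{(s)}‖_∞ ≤ C₀ |I|^{-s} A^i` for `s = 1,…,n-1` and `Lip_I(b_i^{(n-1)}) ≤ C₀ |I|^{-n} A^i`,
then every continuous `i`-th root `f_i` of `b_i` is absolutely continuous with
`‖f_i'‖_{L^p(I)} ≤ C |I|^{-1+1/p} A` for `1 ≤ p < m/(m-1)`, `C = C(n,p,C₀)`. -/
theorem root_Lp_bound_after_splitting (n m : ℕ) (hn : 2 ≤ n) (hm2 : 2 ≤ m) (hmn : m ≤ n)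
    (C₀ : ℝ) (hC₀ : 0 < C₀) (p : ℝ) (hp1 : 1 ≤ p) (hp2 : p < (m : ℝ) / ((m : ℝ) - 1)) :
    ∃ C : ℝ, 0 < C ∧
      ∀ (a b : ℝ), a < b → ∀ A : ℝ, 0 < A →
      ∀ d : ℕ → ℕ → ℝ → ℂ,
      (∀ i ∈ Finset.Icc 2 m, MemCk1 (d i) (n - 1) (Icc a b)) →
      (∀ i ∈ Finset.Icc 2 m, ∀ s : ℕ, 1 ≤ s → s ≤ n - 1 →
        ∀ t ∈ Ioo a b, ‖d i s t‖ ≤ C₀ * ((b - a) ^ s)⁻¹ * A ^ i) →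
      (∀ i ∈ Finset.Icc 2 m, ∀ x ∈ Ioo a b, ∀ y ∈ Ioo a b,
        ‖d i (n - 1) x - d i (n - 1) y‖ ≤ C₀ * ((b - a) ^ n)⁻¹ * A ^ i * |x - y|) →
      ∀ i ∈ Finset.Icc 2 m, ∀ f : ℝ → ℂ, ContinuousOn f (Ioo a b) →
      (∀ t ∈ Ioo a b, f t ^ i = d i 0 t) →
      AbsContOn f (Ioo a b) ∧
      IntegrableOn (fun t => ‖deriv f t‖ ^ p) (Ioo a b) volume ∧
      (∫ t in Ioo a b, ‖deriv f t‖ ^ p) ^ (1 / p) ≤ C * (b - a) ^ (-1 + 1 / p) * A := by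
  have key : ∀ i : ℕ, 2 ≤ i → i ≤ m → p * (1 - 1 / (i:ℝ)) < 1 := by
    intro i h2 him
    have hi0 : (2:ℝ) ≤ i := by exact_mod_cast h2
    have him' : (i:ℝ) ≤ m := by exact_mod_cast him
    have hm1 : (0:ℝ) < (m:ℝ) - 1 := by linarith
    have h1 : p * ((m:ℝ) - 1) < m := (lt_div_iff₀ hm1).1 hp2
    have h3 : 1 / (m:ℝ) ≤ 1 / (i:ℝ) := by gcongr
    calc p * (1 - 1 / (i:ℝ)) ≤ p * (1 - 1 / (m:ℝ)) := by gcongr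
      _ = p * ((m:ℝ) - 1) / m := by
        have : (m:ℝ) ≠ 0 := by linarith
        field_simp
      _ < 1 := by rw [div_lt_one (by linarith)]; exact h1
  have hpos : ∀ i ∈ Finset.Icc 2 m, 0 ≤ Cone C₀ i p (p * (1 - 1 / (i:ℝ))) := by
    intro i hi
    obtain ⟨h2, him⟩ := Finset.mem_Icc.1 hi
    have := Ccore_pos h2 (p := p) (key i h2 him)
    unfold Cone
    positivity
  refine ⟨1 + ∑ i ∈ Finset.Icc 2 m, Cone C₀ i p (p * (1 - 1 / (i:ℝ))),
    by linarith [Finset.sum_nonneg hpos], ?_⟩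
  intro a b hab A hA d hmem hb hL i hi f hf hfi
  obtain ⟨h2, him⟩ := Finset.mem_Icc.1 hi
  obtain ⟨r1, r2, r3⟩ := one_index h2 (him.trans hmn) hC₀ hp1 rfl (key i h2 him) hab hA (hmem i hi)
    (hb i hi) (hL i hi) hf hfi
  refine ⟨r1, r2, r3.trans ?_⟩
  have h4 := Finset.single_le_sum hpos hi
  have hL0 : 0 < b - a := by linarith
  have h5 : Cone C₀ i p (p * (1 - 1 / (i:ℝ))) ≤
      1 + ∑ i ∈ Finset.Icc 2 m, Cone C₀ i p (p * (1 - 1 / (i:ℝ))) := by linarith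
  gcongr
end
end

section
/- Let 𝒥 be a finite collection of open intervals of ℝ whose union is a bounded open interval (α,β). Then 𝒥 has a subcollection that still covers (α,β) and such that every point of (α,β) belongs to at most two intervals of the subcollection. -/
open Set

/-- Every finite collection of open intervals whose union is a bounded
open interval `(α,β)` has a subcollection that still covers `(α,β)` and such that every
point of `(α,β)` belongs to at most two intervals of the subcollection. -/
theorem finite_subcover_multiplicity_two (α β : ℝ) (hαβ : α < β)
    (𝒥 : Finset (ℝ × ℝ))
    (hunion : (⋃ p ∈ 𝒥, Ioo p.1 p.2) = Ioo α β) :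
    ∃ S : Finset (ℝ × ℝ), S ⊆ 𝒥 ∧ (⋃ p ∈ S, Ioo p.1 p.2) = Ioo α β ∧
      ∀ x ∈ Ioo α β, {p | p ∈ S ∧ x ∈ Ioo p.1 p.2}.encard ≤ 2 := by
  classical
  obtain ⟨S, hS, hmin⟩ := Finset.exists_min_image
    (𝒥.powerset.filter fun S => (⋃ p ∈ S, Ioo p.1 p.2) = Ioo α β) Finset.card
    ⟨𝒥, by simp [hunion]⟩
  simp only [Finset.mem_filter, Finset.mem_powerset] at hS hmin
  refine ⟨S, hS.1, hS.2, fun x hx => ?_⟩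
  have hne : (S.filter fun p => x ∈ Ioo p.1 p.2).Nonempty := by
    rw [← hS.2] at hx
    simp only [mem_iUnion] at hx
    obtain ⟨p, hp, hxp⟩ := hx
    exact ⟨p, Finset.mem_filter.2 ⟨hp, hxp⟩⟩
  obtain ⟨a, ha, hamin⟩ := Finset.exists_min_image _ Prod.fst hne
  obtain ⟨b, hb, hbmax⟩ := Finset.exists_max_image _ Prod.snd hne
  simp only [Finset.mem_filter] at ha hb hamin hbmax
  have hsub : {p | p ∈ S ∧ x ∈ Ioo p.1 p.2} ⊆ {a, b} := by
    intro c hc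
    by_contra hcab
    simp only [mem_insert_iff, mem_singleton_iff, not_or] at hcab
    have hcov : (⋃ p ∈ S.erase c, Ioo p.1 p.2) = Ioo α β := by
      rw [← hS.2]
      ext y
      simp only [mem_iUnion, Finset.mem_erase]
      constructor
      · rintro ⟨p, hp, hy⟩
        exact ⟨p, hp.2, hy⟩
      · rintro ⟨p, hp, hy⟩
        by_cases hpc : p = c
        · subst hpc
          have h1 := hamin p hc
          have h2 := hbmax p hc
          rcases le_total y x with h | h
          · exact ⟨a, ⟨Ne.symm hcab.1, ha.1⟩, lt_of_le_of_lt h1 hy.1, lt_of_le_of_lt h ha.2.2⟩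
          · exact ⟨b, ⟨Ne.symm hcab.2, hb.1⟩, lt_of_lt_of_le hb.2.1 h, lt_of_lt_of_le hy.2 h2⟩
        · exact ⟨p, ⟨hpc, hp⟩, hy⟩
    have := hmin (S.erase c) ⟨(Finset.erase_subset _ _).trans hS.1, hcov⟩
    have := Finset.card_erase_lt_of_mem hc.1
    omega
  refine (encard_le_encard hsub).trans ((encard_insert_le _ _).trans ?_)
  rw [encard_singleton]
  norm_num
end
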